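/- Let α, β ≥ -1/2, let k₀ ≥ 1 be an integer and let 0 ≤ k ≤ k₀ be an integer; if α+β = -1 assume additionally k ≥ 1. Define S_k^{α,β}(θ,φ) = ∫₀^∞ ∂_t^{2k} H_t^{α,β}(θ,φ) · t^{2k₀-1} dt. There exists a constant C depending only on α, β, k, k₀ such that |S_k^{α,β}(θ,φ)| ≤ C / μ_{α,β}^+(B(θ, |θ-φ|)) for all θ, φ ∈ (0,π) with θ ≠ φ. -/

import Mathlib

open MeasureTheory Real Set

noncomputable section

/-- The Jacobi measure `μ_{α,β}^+` on `(0,π)`: density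
`(sin(θ/2))^(2α+1) (cos(θ/2))^(2β+1)` w.r.t. Lebesgue measure on `(0,π)`. -/
def jacobiMeasure (α β : ℝ) : Measure ℝ :=
  (volume.restrict (Ioo 0 π)).withDensity
    (fun θ => ENNReal.ofReal (Real.sin (θ / 2) ^ (2 * α + 1) * Real.cos (θ / 2) ^ (2 * β + 1)))

/-- The ball `B(θ,r) = (θ-r, θ+r) ∩ (0,π)`. -/
def jacobiBall (θ r : ℝ) : Set ℝ := Ioo (θ - r) (θ + r) ∩ Ioo 0 π

/-- The measure `Π_α` on `[-1,1]`. -/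
def PiMeasure (α : ℝ) : Measure ℝ :=
  if α = -(1 / 2) then (2 : ENNReal)⁻¹ • (Measure.dirac (-1) + Measure.dirac 1)
  else
    (volume.restrict (Icc (-1) 1)).withDensity
      (fun u => ENNReal.ofReal
        (Real.Gamma (α + 1) / (Real.sqrt π * Real.Gamma (α + 1 / 2)) * (1 - u ^ 2) ^ (α - 1 / 2)))

/-- `q(θ,φ,u,v) = 1 - u sin(θ/2) sin(φ/2) - v cos(θ/2) cos(φ/2)`. -/
def qfun (θ φ u v : ℝ) : ℝ :=
  1 - u * Real.sin (θ / 2) * Real.sin (φ / 2) - v * Real.cos (θ / 2) * Real.cos (φ / 2)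

/-- `Ψ^{α,β}(t,s) = sinh(t/2) / (cosh(t/2) - 1 + s)^(α+β+2)`. -/
def Psi (α β t s : ℝ) : ℝ :=
  Real.sinh (t / 2) / (Real.cosh (t / 2) - 1 + s) ^ (α + β + 2)

/-- The Jacobi-Poisson kernel `H_t^{α,β}(θ,φ)`. -/
def Hker (α β t θ φ : ℝ) : ℝ :=
  ((2 : ℝ) ^ (-(α + β + 2)) / (jacobiMeasure α β (Ioo 0 π)).toReal) * Real.sinh (t / 2) *
    ∫ u, ∫ v, 1 / (Real.cosh (t / 2) - 1 + qfun θ φ u v) ^ (α + β + 2)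
      ∂(PiMeasure β) ∂(PiMeasure α)

/-- The symmetrized kernel `H̃_t^{α,β}(θ,φ) = (1/4) sin θ sin φ H_t^{α+1,β+1}(θ,φ)`. -/
def Htilde (α β t θ φ : ℝ) : ℝ :=
  (1 / 4) * Real.sin θ * Real.sin φ * Hker (α + 1) (β + 1) t θ φ

end

/-- Fundamental theorem of calculus, `lintegral` form for nonnegative derivatives. -/
theorem lint_ftc {G g : ℝ → ℝ} {a b : ℝ} (hab : a ≤ b) (hc : ContinuousOn G (Icc a b))
    (hd : ∀ x ∈ Ioo a b, HasDerivAt G (g x) x) (h0 : ∀ x ∈ Ioo a b, 0 ≤ g x) :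
    ∫⁻ x in Ioo a b, ENNReal.ofReal (g x) = ENNReal.ofReal (G b - G a) := by
  have hIntg : IntegrableOn g (Ioc a b) :=
    intervalIntegral.integrableOn_deriv_of_nonneg hc hd h0
  have hIntg' : IntegrableOn g (Ioo a b) := hIntg.mono_set Ioo_subset_Ioc_self
  rw [← intervalIntegral.integral_eq_sub_of_hasDerivAt_of_le hab hc hd
    ((intervalIntegrable_iff_integrableOn_Ioc_of_le hab).2 hIntg),
    intervalIntegral.integral_of_le hab, integral_Ioc_eq_integral_Ioo,
    ofReal_integral_eq_lintegral_ofReal hIntg']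
  exact (ae_restrict_iff' measurableSet_Ioo).2 (Filter.Eventually.of_forall h0)

/-- The density bound `(1-u²)^(τ-1) ≤ M ((1-u)^(τ-1) + (1+u)^(τ-1))`, half version. -/
theorem dens_half {τ u : ℝ} (h0 : 0 ≤ u) (h1 : u ≤ 1) :
    (1 - u ^ 2) ^ (τ - 1) ≤ (1 + 2 ^ (τ - 1)) * (1 - u) ^ (τ - 1) := by
  have e : (1 - u ^ 2) = (1 + u) * (1 - u) := by ring
  rw [e, Real.mul_rpow (by linarith) (by linarith)]
  apply mul_le_mul_of_nonneg_right _ (Real.rpow_nonneg (by linarith) _)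
  rcases le_total 0 (τ - 1) with h | h
  · have := Real.rpow_le_rpow (by linarith : 0 ≤ 1 + u) (by linarith : 1 + u ≤ 2) h
    linarith
  · have := Real.rpow_le_one_of_one_le_of_nonpos (by linarith : 1 ≤ 1 + u) h
    have := Real.rpow_nonneg (by norm_num : (0:ℝ) ≤ 2) (τ - 1)
    linarith

theorem dens_integrable {τ : ℝ} (hτ : 0 < τ) :
    IntegrableOn (fun u : ℝ => (1 - u ^ 2) ^ (τ - 1)) (Icc (-1) 1) := by
  have h1 : IntervalIntegrable (fun u : ℝ => u ^ (τ - 1)) volume 0 2 :=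
    intervalIntegral.intervalIntegrable_rpow' (by linarith)
  have h2 : IntegrableOn (fun u : ℝ => (1 - u) ^ (τ - 1)) (Icc (-1) 1) := by
    have := (h1.comp_sub_left 1).symm
    rw [intervalIntegrable_iff_integrableOn_Icc_of_le (by norm_num)] at this
    rw [show (1:ℝ) - 2 = -1 by norm_num, show (1:ℝ) - 0 = 1 by norm_num] at this
    exact this
  have h3 : IntegrableOn (fun u : ℝ => (1 + u) ^ (τ - 1)) (Icc (-1) 1) := by
    have := (h1.comp_add_left 1)
    rw [intervalIntegrable_iff_integrableOn_Icc_of_le (by norm_num)] at this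
    rw [show (0:ℝ) - 1 = -1 by norm_num, show (2:ℝ) - 1 = 1 by norm_num] at this
    exact this
  refine Integrable.mono' ((h2.add h3).const_mul (1 + 2 ^ (τ - 1))) ?_ ?_
  · have : Measurable (fun u : ℝ => (1 - u ^ 2) ^ (τ - 1)) := by fun_prop
    exact this.aestronglyMeasurable
  · refine (ae_restrict_iff' measurableSet_Icc).2 (Filter.Eventually.of_forall fun u hu => ?_)
    have hp : 0 ≤ 1 - u ^ 2 := by nlinarith [hu.1, hu.2]
    rw [Real.norm_of_nonneg (Real.rpow_nonneg hp _)]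
    have hM : (0:ℝ) ≤ 1 + 2 ^ (τ - 1) := by positivity
    have a1 := Real.rpow_nonneg (by linarith [hu.2] : 0 ≤ 1 - u) (τ - 1)
    have a2 := Real.rpow_nonneg (by linarith [hu.1] : 0 ≤ 1 + u) (τ - 1)
    simp only [Pi.add_apply]
    rw [mul_add]
    rcases le_total 0 u with h | h
    · have := dens_half (τ := τ) h hu.2
      nlinarith
    · have := dens_half (τ := τ) (u := -u) (by linarith) (by linarith [hu.1])
      rw [neg_sq, sub_neg_eq_add] at this
      nlinarith

theorem PiMeasure_half : PiMeasure (-(1/2)) =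
    (2 : ENNReal)⁻¹ • (Measure.dirac (-1) + Measure.dirac 1) := by simp [PiMeasure]

theorem PiMeasure_finite {α : ℝ} (hα : -(1 / 2) ≤ α) : IsFiniteMeasure (PiMeasure α) := by
  rcases hα.eq_or_lt with h | h
  · rw [← h, PiMeasure_half]
    constructor
    simp
  · rw [PiMeasure, if_neg h.ne']
    have := (dens_integrable (τ := α + 1/2) (by linarith)).const_mul
      (Real.Gamma (α + 1) / (Real.sqrt π * Real.Gamma (α + 1 / 2)))
    have e : α + 1/2 - 1 = α - 1/2 := by ring
    rw [e] at this
    exact isFiniteMeasure_withDensity_ofReal this.2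

theorem PiMeasure_ae {α : ℝ} : ∀ᵐ u ∂(PiMeasure α), u ∈ Icc (-1 : ℝ) 1 := by
  rw [PiMeasure]
  split_ifs with h
  · apply Measure.ae_smul_measure
    rw [ae_add_measure_iff]
    constructor
    · exact (ae_dirac_iff (p := fun x => x ∈ Icc (-1:ℝ) 1) measurableSet_Icc).2 (by norm_num)
    · exact (ae_dirac_iff (p := fun x => x ∈ Icc (-1:ℝ) 1) measurableSet_Icc).2 (by norm_num)
  · exact (withDensity_absolutelyContinuous _ _).ae_le (ae_restrict_mem measurableSet_Icc)

/-- pointwise splitting. -/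
theorem ker_point {τ γ x A w : ℝ} (_hτ : 0 < τ) (_hγ : 0 < γ) (hx : 0 < x) (hA : 0 < A)
    (hw : 0 < w) :
    w ^ (τ - 1) * (x + w * A) ^ (-τ - γ) ≤
      (2 ^ γ + 2 + 2 ^ (1 - τ)) * (x ^ (1 - γ) * (w ^ (τ - 1) * (x + w * A) ^ (-τ - 1))
        + A ^ (1 - τ) * (x + w * A) ^ (-1 - γ)) := by
  have hD : 0 < x + w * A := by positivity
  have n1 : 0 ≤ x ^ (1 - γ) * (w ^ (τ - 1) * (x + w * A) ^ (-τ - 1)) := by positivity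
  have n2 : 0 ≤ A ^ (1 - τ) * (x + w * A) ^ (-1 - γ) := by positivity
  have p1 : (0:ℝ) < 2 ^ γ := by positivity
  have p2 : (0:ℝ) < 2 ^ (1 - τ) := by positivity
  rcases le_total (w * A) x with h | h
  · -- region wA ≤ x
    have key : (x + w * A) ^ (-τ - γ) ≤ (2 ^ γ + 2) * (x ^ (1 - γ) * (x + w * A) ^ (-τ - 1)) := by
      have e : (x + w * A) ^ (-τ - γ) = (x + w * A) ^ (1 - γ) * (x + w * A) ^ (-τ - 1) := by
        rw [← Real.rpow_add hD]; ring_nf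
      rw [e, ← mul_assoc]
      apply mul_le_mul_of_nonneg_right _ (by positivity)
      rcases le_total 0 (1 - γ) with h' | h'
      · calc (x + w * A) ^ (1 - γ) ≤ (2 * x) ^ (1 - γ) :=
              Real.rpow_le_rpow hD.le (by linarith) h'
          _ = 2 ^ (1 - γ) * x ^ (1 - γ) := Real.mul_rpow (by norm_num) hx.le
          _ ≤ 2 * x ^ (1 - γ) := by
              apply mul_le_mul_of_nonneg_right _ (by positivity)
              calc (2:ℝ) ^ (1 - γ) ≤ 2 ^ (1:ℝ) :=
                    Real.rpow_le_rpow_of_exponent_le (by norm_num) (by linarith)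
                _ = 2 := by simp
          _ ≤ _ := by
              apply mul_le_mul_of_nonneg_right _ (by positivity)
              linarith
      · calc (x + w * A) ^ (1 - γ) ≤ x ^ (1 - γ) :=
              Real.rpow_le_rpow_of_nonpos hx (by nlinarith [mul_pos hw hA]) h'
          _ ≤ _ := by
              apply le_mul_of_one_le_left (by positivity)
              linarith
    have hwp : 0 ≤ w ^ (τ - 1) := by positivity
    calc w ^ (τ - 1) * (x + w * A) ^ (-τ - γ)
        ≤ w ^ (τ - 1) * ((2 ^ γ + 2) * (x ^ (1 - γ) * (x + w * A) ^ (-τ - 1))) := by gcongr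
      _ = (2 ^ γ + 2) * (x ^ (1 - γ) * (w ^ (τ - 1) * (x + w * A) ^ (-τ - 1))) := by ring
      _ ≤ _ := by nlinarith
  · have key : w ^ (τ - 1) ≤ (2 + 2 ^ (1 - τ)) * (A ^ (1 - τ) * (x + w * A) ^ (τ - 1)) := by
      have hwe : w = (w * A) / A := by field_simp
      have e : w ^ (τ - 1) = A ^ (1 - τ) * (w * A) ^ (τ - 1) := by
        rw [Real.mul_rpow hw.le hA.le]
        have : A ^ (1 - τ) * A ^ (τ - 1) = 1 := by
          rw [← Real.rpow_add hA]; simp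
        linear_combination (-(w ^ (τ - 1))) * this
      rw [e]
      have : (w * A) ^ (τ - 1) ≤ (2 + 2 ^ (1 - τ)) * (x + w * A) ^ (τ - 1) := by
        rcases le_total 0 (τ - 1) with h' | h'
        · calc (w * A) ^ (τ - 1) ≤ (x + w * A) ^ (τ - 1) :=
                Real.rpow_le_rpow (by positivity) (by linarith) h'
            _ ≤ _ := by
              apply le_mul_of_one_le_left (by positivity)
              linarith
        · have hh : (x + w * A) / 2 ≤ w * A := by linarith
          calc (w * A) ^ (τ - 1) ≤ ((x + w * A) / 2) ^ (τ - 1) :=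
                Real.rpow_le_rpow_of_nonpos (by positivity) hh h'
            _ = 2 ^ (1 - τ) * (x + w * A) ^ (τ - 1) := by
                rw [Real.div_rpow hD.le (by norm_num), div_eq_inv_mul, ← Real.rpow_neg (by norm_num)]
                ring_nf
            _ ≤ _ := by
              apply mul_le_mul_of_nonneg_right _ (by positivity)
              linarith
      calc A ^ (1 - τ) * (w * A) ^ (τ - 1)
          ≤ A ^ (1 - τ) * ((2 + 2 ^ (1 - τ)) * (x + w * A) ^ (τ - 1)) := by gcongr
        _ = _ := by ring
    have e2 : (x + w * A) ^ (τ - 1) * (x + w * A) ^ (-τ - γ) = (x + w * A) ^ (-1 - γ) := by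
      rw [← Real.rpow_add hD]; ring_nf
    calc w ^ (τ - 1) * (x + w * A) ^ (-τ - γ)
        ≤ ((2 + 2 ^ (1 - τ)) * (A ^ (1 - τ) * (x + w * A) ^ (τ - 1))) * (x + w * A) ^ (-τ - γ) := by
          gcongr
      _ = (2 + 2 ^ (1 - τ)) * (A ^ (1 - τ) * (x + w * A) ^ (-1 - γ)) := by rw [← e2]; ring
      _ ≤ _ := by nlinarith

theorem ker_int1 {τ x A : ℝ} (hτ : 0 < τ) (hx : 0 < x) (hA : 0 < A) :
    ∫⁻ u in Ioo (0:ℝ) 1, ENNReal.ofReal ((1 - u) ^ (τ - 1) * (x + (1 - u) * A) ^ (-τ - 1))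
      ≤ ENNReal.ofReal (1 / τ * x ^ (-1 : ℝ) * A ^ (-τ)) := by
  rw [lint_ftc (G := fun u => -(1 / τ * x ^ (-1 : ℝ) * ((1 - u) / (x + (1 - u) * A)) ^ τ))
    zero_le_one]
  · apply ENNReal.ofReal_le_ofReal
    simp only [sub_self, zero_div, Real.zero_rpow hτ.ne']
    simp only [mul_zero, neg_zero, sub_zero, one_mul, zero_sub, neg_neg]
    apply mul_le_mul_of_nonneg_left _ (by positivity)
    rw [Real.rpow_neg hA.le, ← Real.inv_rpow hA.le, one_div]
    apply Real.rpow_le_rpow (by positivity) _ hτ.le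
    exact inv_anti₀ hA (by linarith)
  · apply ContinuousOn.neg
    apply ContinuousOn.mul continuousOn_const
    apply ContinuousOn.rpow_const
    · apply ContinuousOn.div (by fun_prop) (by fun_prop)
      intro u hu
      have : 0 ≤ (1 - u) * A := mul_nonneg (by linarith [hu.2]) hA.le
      positivity
    · intro u hu; right; exact hτ.le
  · intro u hu
    have hw : 0 < 1 - u := by linarith [hu.2]
    have hD : 0 < x + (1 - u) * A := by positivity
    have h1 : HasDerivAt (fun u : ℝ => 1 - u) (-1) u := by
      simpa using (hasDerivAt_id u).const_sub 1
    have h2 : HasDerivAt (fun u : ℝ => x + (1 - u) * A) (-A) u := by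
      simpa using (h1.mul_const A).const_add x
    have h3 := (h1.div h2 hD.ne').rpow_const (p := τ) (Or.inl (div_pos hw hD).ne')
    have h4 := (h3.const_mul (1 / τ * x ^ (-1 : ℝ))).neg
    refine h4.congr_deriv ?_
    simp only [Pi.div_apply]
    rw [Real.div_rpow hw.le hD.le]
    have e1 : (x + (1 - u) * A) ^ (-τ - 1) =
        ((x + (1 - u) * A) ^ (τ - 1))⁻¹ * ((x + (1 - u) * A) ^ 2)⁻¹ := by
      rw [← Real.rpow_neg hD.le, ← Real.rpow_natCast, ← Real.rpow_neg hD.le, ← Real.rpow_add hD]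
      congr 1; push_cast; ring
    rw [e1, Real.rpow_neg_one]
    field_simp
    ring
  · intro u hu
    have hw : 0 < 1 - u := by linarith [hu.2]
    positivity

theorem ker_int2 {γ x A : ℝ} (hγ : 0 < γ) (hx : 0 < x) (hA : 0 < A) :
    ∫⁻ u in Ioo (0:ℝ) 1, ENNReal.ofReal ((x + (1 - u) * A) ^ (-1 - γ))
      ≤ ENNReal.ofReal (1 / γ * A ^ (-1 : ℝ) * x ^ (-γ)) := by
  rw [lint_ftc (G := fun u => (1 / γ * A ^ (-1 : ℝ) * (x + (1 - u) * A) ^ (-γ)))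
    zero_le_one]
  · apply ENNReal.ofReal_le_ofReal
    simp only [sub_self, zero_mul, add_zero]
    have : 0 ≤ 1 / γ * A ^ (-1 : ℝ) * (x + (1 - 0) * A) ^ (-γ) := by
      have : 0 < x + (1 - 0) * A := by linarith
      positivity
    linarith
  · apply ContinuousOn.mul continuousOn_const
    apply ContinuousOn.rpow_const (by fun_prop)
    intro u hu
    left
    have : 0 ≤ (1 - u) * A := mul_nonneg (by linarith [hu.2]) hA.le
    positivity
  · intro u hu
    have hw : 0 < 1 - u := by linarith [hu.2]
    have hD : 0 < x + (1 - u) * A := by positivity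
    have h1 : HasDerivAt (fun u : ℝ => 1 - u) (-1) u := by
      simpa using (hasDerivAt_id u).const_sub 1
    have h2 : HasDerivAt (fun u : ℝ => x + (1 - u) * A) (-A) u := by
      simpa using (h1.mul_const A).const_add x
    have h3 := h2.rpow_const (p := -γ) (Or.inl hD.ne')
    refine (h3.const_mul (1 / γ * A ^ (-1 : ℝ))).congr_deriv ?_
    rw [Real.rpow_neg_one, show -γ - 1 = -1 - γ by ring]
    field_simp
  · intro u hu
    have hw : 0 < 1 - u := by linarith [hu.2]
    positivity

/-- One-dimensional kernel estimate, weak form. -/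
theorem ker_weak {α γ : ℝ} (hα : -(1 / 2) < α) (hγ : 0 < γ) :
    ∃ C : ℝ, 0 < C ∧ ∀ x A : ℝ, 0 < x → 0 < A →
      ∫⁻ u, ENNReal.ofReal ((x + (1 - u) * A) ^ (-(α + 1 / 2) - γ)) ∂(PiMeasure α) ≤
        ENNReal.ofReal (C * x ^ (-γ) * A ^ (-(α + 1 / 2))) := by
  have hfin := PiMeasure_finite hα.le
  set τ := α + 1 / 2 with hτd
  have hτ : 0 < τ := by rw [hτd]; linarith
  set c := Real.Gamma (α + 1) / (Real.sqrt π * Real.Gamma (α + 1 / 2)) with hc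
  have hc0 : 0 < c := by
    have h1 := Real.Gamma_pos_of_pos (by linarith : 0 < α + 1)
    have h2 := Real.Gamma_pos_of_pos (by linarith : 0 < α + 1 / 2)
    have := Real.pi_pos
    positivity
  have hPi : PiMeasure α = (volume.restrict (Icc (-1) 1)).withDensity
      (fun u => ENNReal.ofReal (c * (1 - u ^ 2) ^ (τ - 1))) := by
    rw [PiMeasure, if_neg hα.ne']
    have : α - 1 / 2 = τ - 1 := by rw [hτd]; ring
    rw [this]
  set K := c * (1 + 2 ^ (τ - 1)) * (2 ^ γ + 2 + 2 ^ (1 - τ)) with hK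
  have hK0 : 0 < K := by positivity
  set mass := (PiMeasure α univ).toReal with hmass
  refine ⟨mass + K * (1 / τ + 1 / γ) , by positivity, fun x A hx hA => ?_⟩
  have hdm : Measurable (fun u : ℝ => ENNReal.ofReal (c * (1 - u ^ 2) ^ (τ - 1))) := by fun_prop
  have hfm : Measurable (fun u : ℝ => ENNReal.ofReal ((x + (1 - u) * A) ^ (-τ - γ))) := by fun_prop
  set m0 := x ^ (-γ) * A ^ (-τ) with hm0
  have hm00 : 0 < m0 := by positivity
  -- pointwise bound
  have hpt : ∀ u ∈ Ioo (-1 : ℝ) 1, ENNReal.ofReal ((x + (1 - u) * A) ^ (-τ - γ)) *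
      ENNReal.ofReal (c * (1 - u ^ 2) ^ (τ - 1)) ≤
      ENNReal.ofReal m0 * ENNReal.ofReal (c * (1 - u ^ 2) ^ (τ - 1)) +
      (Ioo (0:ℝ) 1).indicator (fun u => ENNReal.ofReal (K * x ^ (1 - γ)) *
        ENNReal.ofReal ((1 - u) ^ (τ - 1) * (x + (1 - u) * A) ^ (-τ - 1)) +
        ENNReal.ofReal (K * A ^ (1 - τ)) * ENNReal.ofReal ((x + (1 - u) * A) ^ (-1 - γ))) u := by
    intro u hu
    have hw : 0 < 1 - u := by linarith [hu.2]
    rcases le_or_gt u 0 with h | h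
    · refine le_trans ?_ le_self_add
      gcongr
      have e : m0 = x ^ (-γ) * A ^ (-τ) := rfl
      have hAD : A ≤ x + (1 - u) * A := by nlinarith
      have hxD : x ≤ x + (1 - u) * A := by nlinarith
      have hD : 0 < x + (1 - u) * A := by positivity
      rw [sub_eq_add_neg (-τ) γ, Real.rpow_add hD, mul_comm, e]
      gcongr ?_ * ?_
      · exact Real.rpow_le_rpow_of_nonpos hx hxD (by linarith)
      · exact Real.rpow_le_rpow_of_nonpos hA hAD (by linarith)
    · refine le_trans ?_ le_add_self
      rw [indicator_of_mem (show u ∈ Ioo (0:ℝ) 1 from ⟨h, hu.2⟩)]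
      have hD : 0 < x + (1 - u) * A := by positivity
      rw [← ENNReal.ofReal_mul (by positivity), ← ENNReal.ofReal_mul (by positivity),
        ← ENNReal.ofReal_mul (by positivity), ← ENNReal.ofReal_add (by positivity) (by positivity)]
      apply ENNReal.ofReal_le_ofReal
      have h1 := dens_half (τ := τ) h.le hu.2.le
      have h2 := ker_point hτ hγ hx hA hw
      calc (x + (1 - u) * A) ^ (-τ - γ) * (c * (1 - u ^ 2) ^ (τ - 1))
          ≤ (x + (1 - u) * A) ^ (-τ - γ) * (c * ((1 + 2 ^ (τ - 1)) * (1 - u) ^ (τ - 1))) := by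
            gcongr
        _ = c * (1 + 2 ^ (τ - 1)) * ((1 - u) ^ (τ - 1) * (x + (1 - u) * A) ^ (-τ - γ)) := by ring
        _ ≤ c * (1 + 2 ^ (τ - 1)) * _ := mul_le_mul_of_nonneg_left h2 (by positivity)
        _ = _ := by rw [hK]; ring
  have hmassE : ∫⁻ u in Ioo (-1:ℝ) 1, ENNReal.ofReal (c * (1 - u ^ 2) ^ (τ - 1)) =
      PiMeasure α univ := by
    rw [hPi, withDensity_apply _ MeasurableSet.univ, Measure.restrict_univ]
    exact setLIntegral_congr Ioo_ae_eq_Icc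
  have hI1 := ker_int1 hτ hx hA
  have hI2 := ker_int2 hγ hx hA
  calc ∫⁻ u, ENNReal.ofReal ((x + (1 - u) * A) ^ (-τ - γ)) ∂(PiMeasure α)
      = ∫⁻ u in Ioo (-1:ℝ) 1, ENNReal.ofReal ((x + (1 - u) * A) ^ (-τ - γ)) *
      ENNReal.ofReal (c * (1 - u ^ 2) ^ (τ - 1)) := by
        rw [hPi, lintegral_withDensity_eq_lintegral_mul _ hdm hfm]
        rw [← setLIntegral_congr Ioo_ae_eq_Icc]
        simp only [Pi.mul_apply, mul_comm]
    _ ≤ _ := setLIntegral_mono' measurableSet_Ioo hpt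
    _ = ENNReal.ofReal m0 * PiMeasure α univ + (∫⁻ u in Ioo (0 : ℝ) 1,
        (ENNReal.ofReal (K * x ^ (1 - γ)) *
        ENNReal.ofReal ((1 - u) ^ (τ - 1) * (x + (1 - u) * A) ^ (-τ - 1)) +
        ENNReal.ofReal (K * A ^ (1 - τ)) * ENNReal.ofReal ((x + (1 - u) * A) ^ (-1 - γ)))) := by
        rw [lintegral_add_left (by fun_prop), lintegral_const_mul _ hdm, hmassE,
          lintegral_indicator measurableSet_Ioo, Measure.restrict_restrict measurableSet_Ioo,
          inter_eq_self_of_subset_left (Ioo_subset_Ioo_left (by norm_num))]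
    _ ≤ ENNReal.ofReal m0 * PiMeasure α univ +
        (ENNReal.ofReal (K * x ^ (1 - γ)) * ENNReal.ofReal (1 / τ * x ^ (-1 : ℝ) * A ^ (-τ)) +
        ENNReal.ofReal (K * A ^ (1 - τ)) * ENNReal.ofReal (1 / γ * A ^ (-1 : ℝ) * x ^ (-γ))) := by
        rw [lintegral_add_left (by fun_prop), lintegral_const_mul _ (by fun_prop),
          lintegral_const_mul _ (by fun_prop)]
        gcongr
    _ = _ := by
        rw [← ENNReal.ofReal_toReal (measure_ne_top (PiMeasure α) univ), ← hmass,
          ← ENNReal.ofReal_mul (by positivity), ← ENNReal.ofReal_mul (by positivity),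
          ← ENNReal.ofReal_mul (by positivity), ← ENNReal.ofReal_add (by positivity) (by positivity),
          ← ENNReal.ofReal_add (by positivity) (by positivity)]
        congr 1
        have e1 : x ^ (1 - γ) * x ^ (-1 : ℝ) = x ^ (-γ) := by
          rw [← Real.rpow_add hx]; ring_nf
        have e2 : A ^ (1 - τ) * A ^ (-1 : ℝ) = A ^ (-τ) := by
          rw [← Real.rpow_add hA]; ring_nf
        rw [hm0]
        linear_combination K * (1 / τ) * A ^ (-τ) * e1 + K * (1 / γ) * x ^ (-γ) * e2

/-- One-dimensional kernel estimate. -/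
theorem ker_one {α γ : ℝ} (hα : -(1 / 2) ≤ α) (hγ : 0 < γ) :
    ∃ C : ℝ, 0 < C ∧ ∀ x A : ℝ, 0 < x → 0 < A →
      ∫⁻ u, ENNReal.ofReal ((x + (1 - u) * A) ^ (-(α + 1 / 2) - γ)) ∂(PiMeasure α) ≤
        ENNReal.ofReal (C * x ^ (-γ) * (x + A) ^ (-(α + 1 / 2))) := by
  have hfin := PiMeasure_finite hα
  have htriv : ∀ x A : ℝ, 0 < x → 0 < A →
      ∫⁻ u, ENNReal.ofReal ((x + (1 - u) * A) ^ (-(α + 1 / 2) - γ)) ∂(PiMeasure α) ≤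
        ENNReal.ofReal ((PiMeasure α univ).toReal * x ^ (-γ) * x ^ (-(α + 1 / 2))) := by
    intro x A hx hA
    calc _ ≤ ∫⁻ u, ENNReal.ofReal (x ^ (-(α + 1 / 2) - γ)) ∂(PiMeasure α) := by
          apply lintegral_mono_ae
          filter_upwards [PiMeasure_ae (α := α)] with u hu
          apply ENNReal.ofReal_le_ofReal
          have : 0 ≤ (1 - u) * A := mul_nonneg (by linarith [hu.2]) hA.le
          exact Real.rpow_le_rpow_of_nonpos hx (by linarith) (by linarith)
      _ = _ := by
          rw [lintegral_const, ← ENNReal.ofReal_toReal (measure_ne_top (PiMeasure α) univ),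
            ← ENNReal.ofReal_mul (by positivity), sub_eq_add_neg, Real.rpow_add hx,
            ENNReal.toReal_ofReal (by positivity)]
          congr 1; ring
  rcases hα.eq_or_lt with h | h
  · refine ⟨(PiMeasure α univ).toReal + 1, by positivity, fun x A hx hA => ?_⟩
    refine (htriv x A hx hA).trans (ENNReal.ofReal_le_ofReal ?_)
    have : α + 1 / 2 = 0 := by linarith
    rw [this]
    simp only [neg_zero, Real.rpow_zero, mul_one]
    gcongr
    linarith
  · obtain ⟨C, hC, H⟩ := ker_weak h hγ
    refine ⟨((PiMeasure α univ).toReal + C) * 2 ^ (α + 1 / 2), by positivity, fun x A hx hA => ?_⟩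
    have key : ∀ y, 0 < y → x + A ≤ 2 * y →
        y ^ (-(α + 1 / 2)) ≤ 2 ^ (α + 1 / 2) * (x + A) ^ (-(α + 1 / 2)) := by
      intro y hy hxy
      have := Real.rpow_le_rpow_of_nonpos (by positivity) hxy (by linarith : -(α + 1 / 2) ≤ 0)
      rw [Real.mul_rpow (by norm_num) hy.le, Real.rpow_neg (by norm_num) (α + 1 / 2)] at this
      rwa [← inv_mul_le_iff₀ (by positivity)]
    rcases le_total A x with hAx | hAx
    · refine (htriv x A hx hA).trans (ENNReal.ofReal_le_ofReal ?_)
      calc _ ≤ (PiMeasure α univ).toReal * x ^ (-γ) * (2 ^ (α + 1 / 2) * (x + A) ^ (-(α + 1 / 2))) := by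
            gcongr; exact key x hx (by linarith)
        _ ≤ ((PiMeasure α univ).toReal + C) * x ^ (-γ) * (2 ^ (α + 1 / 2) * (x + A) ^ (-(α + 1 / 2))) := by
            gcongr; linarith
        _ = _ := by ring
    · refine (H x A hx hA).trans (ENNReal.ofReal_le_ofReal ?_)
      calc _ ≤ C * x ^ (-γ) * (2 ^ (α + 1 / 2) * (x + A) ^ (-(α + 1 / 2))) := by
            gcongr; exact key A hA (by linarith)
        _ ≤ ((PiMeasure α univ).toReal + C) * x ^ (-γ) * (2 ^ (α + 1 / 2) * (x + A) ^ (-(α + 1 / 2))) := by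
            gcongr; linarith [(ENNReal.toReal_nonneg : 0 ≤ (PiMeasure α univ).toReal)]
        _ = _ := by ring

theorem qfun_eq (θ φ u v : ℝ) : qfun θ φ u v = (1 - Real.cos ((θ - φ) / 2)) +
    (1 - u) * (Real.sin (θ / 2) * Real.sin (φ / 2)) +
    (1 - v) * (Real.cos (θ / 2) * Real.cos (φ / 2)) := by
  have : Real.cos ((θ - φ) / 2) = Real.cos (θ / 2) * Real.cos (φ / 2) +
      Real.sin (θ / 2) * Real.sin (φ / 2) := by
    rw [← Real.cos_sub]; ring_nf
  rw [this, qfun]; ring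

/-- Lower bound for `1 - cos`. -/
theorem one_sub_cos_ge {x : ℝ} (h0 : 0 ≤ x) (h1 : x ≤ π) :
    x ^ 2 / (2 * π ^ 2) ≤ 1 - Real.cos (x / 2) := by
  have hπ := Real.pi_pos
  have h2 := Real.mul_le_sin (x := x / 4) (by positivity) (by linarith)
  have h3 : Real.cos (x / 2) = 1 - 2 * Real.sin (x / 4) ^ 2 := by
    rw [show x / 2 = 2 * (x / 4) by ring, Real.cos_two_mul, Real.cos_sq']; ring
  have h4 : (2 / π * (x / 4)) ^ 2 ≤ Real.sin (x / 4) ^ 2 := by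
    gcongr
  have h5 : (2 / π * (x / 4)) ^ 2 = x ^ 2 / (2 * π ^ 2) / 2 := by
    field_simp; ring
  rw [h3]; linarith

theorem one_sub_cos_mul_ge {x y : ℝ} (hx : x ∈ Ioo 0 π) (hy : y ∈ Ioo 0 π) :
    (x + y) ^ 2 / (8 * π ^ 2) ≤ 1 - Real.cos (x / 2) * Real.cos (y / 2) := by
  have hπ := Real.pi_pos
  wlog h : x ≤ y generalizing x y
  · have := this hy hx (by linarith)
    rw [add_comm, mul_comm (Real.cos _)]; exact this
  have h1 := one_sub_cos_ge hy.1.le hy.2.le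
  have h2 : 0 < Real.cos (y / 2) := Real.cos_pos_of_mem_Ioo ⟨by linarith [hy.1], by linarith [hy.2]⟩
  have h3 := Real.cos_le_one (x / 2)
  have h4 : (x + y) ^ 2 / (8 * π ^ 2) ≤ y ^ 2 / (2 * π ^ 2) := by
    rw [div_le_div_iff₀ (by positivity) (by positivity)]
    have : (x + y) ^ 2 ≤ (2 * y) ^ 2 := by
      exact pow_le_pow_left₀ (by linarith [hx.1, hy.1]) (by linarith) 2
    nlinarith [sq_nonneg π]
  nlinarith

theorem ker_two {α β : ℝ} (hα : -(1 / 2) ≤ α) (hβ : -(1 / 2) ≤ β) :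
    ∃ C : ℝ, 0 < C ∧ ∀ x A B : ℝ, 0 < x → 0 < A → 0 < B →
      ∫⁻ u, ∫⁻ v, ENNReal.ofReal ((x + (1 - u) * A + (1 - v) * B) ^ (-(α + β + 3 / 2)))
        ∂(PiMeasure β) ∂(PiMeasure α) ≤
      ENNReal.ofReal (C * (x ^ (-(1 / 2) : ℝ) * (x + A) ^ (-(α + 1 / 2)) *
        (x + B) ^ (-(β + 1 / 2)))) := by
  obtain ⟨C1, hC1, H1⟩ := ker_one hβ (γ := α + 1) (by linarith)
  obtain ⟨C2, hC2, H2⟩ := ker_one hα (γ := 1 / 2) (by norm_num)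
  refine ⟨C1 * C2, by positivity, fun x A B hx hA hB => ?_⟩
  calc _ ≤ ∫⁻ u, ENNReal.ofReal (C1 * (x + B) ^ (-(β + 1 / 2))) *
        ENNReal.ofReal ((x + (1 - u) * A) ^ (-(α + 1 / 2) - 1 / 2)) ∂(PiMeasure α) := by
        apply lintegral_mono_ae
        filter_upwards [PiMeasure_ae (α := α)] with u hu
        have h0 : 0 ≤ (1 - u) * A := mul_nonneg (by linarith [hu.2]) hA.le
        have hD : 0 < x + (1 - u) * A := by positivity
        have h1 := H1 (x + (1 - u) * A) B hD hB
        rw [show -(β + 1 / 2) - (α + 1) = -(α + β + 3 / 2) by ring] at h1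
        refine h1.trans ?_
        rw [← ENNReal.ofReal_mul (by positivity)]
        apply ENNReal.ofReal_le_ofReal
        rw [show -(α + 1 / 2) - 1 / 2 = -(α + 1) by ring]
        have : (x + (1 - u) * A + B) ^ (-(β + 1 / 2)) ≤ (x + B) ^ (-(β + 1 / 2)) :=
          Real.rpow_le_rpow_of_nonpos (by positivity) (by linarith) (by linarith)
        calc _ ≤ C1 * (x + (1 - u) * A) ^ (-(α + 1)) * (x + B) ^ (-(β + 1 / 2)) := by gcongr
          _ = _ := by ring
    _ = ENNReal.ofReal (C1 * (x + B) ^ (-(β + 1 / 2))) *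
        ∫⁻ u, ENNReal.ofReal ((x + (1 - u) * A) ^ (-(α + 1 / 2) - 1 / 2)) ∂(PiMeasure α) :=
        lintegral_const_mul _ (by fun_prop)
    _ ≤ _ := by
        refine (mul_le_mul_right (H2 x A hx hA) _).trans ?_
        rw [← ENNReal.ofReal_mul (by positivity)]
        apply le_of_eq
        congr 1; ring

theorem jac_upper {α β : ℝ} (hα : -(1 / 2) ≤ α) (hβ : -(1 / 2) ≤ β) {θ φ : ℝ}
    (hθ : θ ∈ Ioo 0 π) (hφ : φ ∈ Ioo 0 π) :
    jacobiMeasure α β (jacobiBall θ |θ - φ|) ≤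
      ENNReal.ofReal (2 * |θ - φ| * ((θ + φ) ^ (2 * α + 1) *
        ((π - θ) + (π - φ)) ^ (2 * β + 1))) := by
  have hm : MeasurableSet (jacobiBall θ |θ - φ|) := measurableSet_Ioo.inter measurableSet_Ioo
  set K := (θ + φ) ^ (2 * α + 1) * ((π - θ) + (π - φ)) ^ (2 * β + 1) with hK
  have hr : |θ - φ| ≤ θ + φ := by rw [abs_le]; constructor <;> linarith [hθ.1, hφ.1]
  have hr' : |θ - φ| ≤ (π - θ) + (π - φ) := by
    rw [abs_le]; constructor <;> linarith [hθ.2, hφ.2]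
  rw [jacobiMeasure, withDensity_apply _ hm, Measure.restrict_restrict hm]
  calc _ ≤ ∫⁻ x in jacobiBall θ |θ - φ| ∩ Ioo 0 π, ENNReal.ofReal K := by
        apply setLIntegral_mono' (hm.inter measurableSet_Ioo)
        rintro x ⟨⟨⟨h1, h2⟩, -⟩, h3, h4⟩
        apply ENNReal.ofReal_le_ofReal
        have s1 : 0 ≤ Real.sin (x / 2) :=
          Real.sin_nonneg_of_nonneg_of_le_pi (by linarith) (by linarith)
        have s2 : Real.sin (x / 2) ≤ θ + φ :=
          (Real.sin_le (by linarith)).trans (by linarith [hφ.1])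
        have e : Real.cos (x / 2) = Real.sin ((π - x) / 2) := by
          rw [← Real.sin_pi_div_two_sub]; ring_nf
        have c1 : 0 ≤ Real.cos (x / 2) := by
          rw [e]; exact Real.sin_nonneg_of_nonneg_of_le_pi (by linarith) (by linarith)
        have c2 : Real.cos (x / 2) ≤ (π - θ) + (π - φ) := by
          rw [e]; exact (Real.sin_le (by linarith)).trans (by linarith [hφ.2])
        rw [hK]
        apply mul_le_mul (Real.rpow_le_rpow s1 s2 (by linarith))
          (Real.rpow_le_rpow c1 c2 (by linarith)) (by positivity)
        exact Real.rpow_nonneg (by linarith) _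
    _ = ENNReal.ofReal K * volume (jacobiBall θ |θ - φ| ∩ Ioo 0 π) := by
        rw [setLIntegral_const]
    _ ≤ ENNReal.ofReal K * volume (Ioo (θ - |θ - φ|) (θ + |θ - φ|)) := by
        gcongr
        intro x hx
        exact hx.1.1
    _ = _ := by
        rw [Real.volume_Ioo, ← ENNReal.ofReal_mul]
        · congr 1; ring
        · exact mul_nonneg (Real.rpow_nonneg (by linarith [hθ.1, hφ.1]) _)
            (Real.rpow_nonneg (by linarith [hθ.2, hφ.2]) _)

theorem jac_pos {α β : ℝ} (hα : -(1 / 2) ≤ α) (hβ : -(1 / 2) ≤ β) {θ φ : ℝ}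
    (hθ : θ ∈ Ioo 0 π) (hφ : φ ∈ Ioo 0 π) (hne : θ ≠ φ) :
    0 < (jacobiMeasure α β (jacobiBall θ |θ - φ|)).toReal := by
  have hm : MeasurableSet (jacobiBall θ |θ - φ|) := measurableSet_Ioo.inter measurableSet_Ioo
  have hr : 0 < |θ - φ| := abs_pos.2 (sub_ne_zero.2 hne)
  apply ENNReal.toReal_pos
  · rw [jacobiMeasure, withDensity_apply _ hm, Measure.restrict_restrict hm]
    have : jacobiBall θ |θ - φ| ∩ Ioo 0 π = jacobiBall θ |θ - φ| := by
      apply inter_eq_self_of_subset_left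
      exact inter_subset_right
    rw [this]
    have hsup : jacobiBall θ |θ - φ| ⊆ Function.support (fun θ => ENNReal.ofReal
        (Real.sin (θ / 2) ^ (2 * α + 1) * Real.cos (θ / 2) ^ (2 * β + 1))) := by
      rintro x ⟨-, h1, h2⟩
      have s1 : 0 < Real.sin (x / 2) := Real.sin_pos_of_pos_of_lt_pi (by linarith) (by linarith)
      have s2 : 0 < Real.cos (x / 2) := Real.cos_pos_of_mem_Ioo ⟨by linarith, by linarith⟩
      have : 0 < Real.sin (x / 2) ^ (2 * α + 1) * Real.cos (x / 2) ^ (2 * β + 1) := by positivity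
      simp only [Function.mem_support, ne_eq, ENNReal.ofReal_eq_zero, not_le]
      exact this
    refine ((setLIntegral_pos_iff (by fun_prop)).2 ?_).ne'
    rw [inter_eq_self_of_subset_right hsup]
    have ho : IsOpen (jacobiBall θ |θ - φ|) := isOpen_Ioo.inter isOpen_Ioo
    exact ho.measure_pos _ ⟨θ, ⟨by linarith, by linarith⟩, hθ⟩
  · exact ((jac_upper hα hβ hθ hφ).trans_lt ENNReal.ofReal_lt_top).ne

theorem rpow_sq_bound {c y z p : ℝ} (hc : 0 < c) (hy : 0 < y) (hp : 0 ≤ p)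
    (h : y ^ 2 / c ≤ z) : z ^ (-p) ≤ c ^ p * (y ^ (2 * p))⁻¹ := by
  have h1 := Real.rpow_le_rpow_of_nonpos (by positivity) h (by linarith : -p ≤ 0)
  refine h1.trans (le_of_eq ?_)
  rw [Real.rpow_neg (by positivity), Real.div_rpow (by positivity) hc.le, inv_div, div_eq_mul_inv,
    Real.rpow_mul hy.le]
  norm_num

theorem ker_mu {α β : ℝ} (hα : -(1 / 2) ≤ α) (hβ : -(1 / 2) ≤ β) :
    ∃ C : ℝ, 0 < C ∧ ∀ θ ∈ Ioo (0 : ℝ) π, ∀ φ ∈ Ioo (0 : ℝ) π, θ ≠ φ →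
      ∫⁻ u, ∫⁻ v, ENNReal.ofReal (qfun θ φ u v ^ (-(α + β + 3 / 2)))
        ∂(PiMeasure β) ∂(PiMeasure α) ≤
      ENNReal.ofReal (C / (jacobiMeasure α β (jacobiBall θ |θ - φ|)).toReal) := by
  obtain ⟨C, hC, H⟩ := ker_two hα hβ
  have hπ := Real.pi_pos
  set M := (2 * π ^ 2) ^ (1 / 2 : ℝ) * (8 * π ^ 2) ^ (α + 1 / 2) * (8 * π ^ 2) ^ (β + 1 / 2) with hM
  have hM0 : 0 < M := by positivity
  refine ⟨C * M * 2, by positivity, fun θ hθ φ hφ hne => ?_⟩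
  have hs1 : 0 < Real.sin (θ / 2) := Real.sin_pos_of_pos_of_lt_pi (by linarith [hθ.1]) (by linarith [hθ.2])
  have hs2 : 0 < Real.sin (φ / 2) := Real.sin_pos_of_pos_of_lt_pi (by linarith [hφ.1]) (by linarith [hφ.2])
  have hc1 : 0 < Real.cos (θ / 2) := Real.cos_pos_of_mem_Ioo ⟨by linarith [hθ.1], by linarith [hθ.2]⟩
  have hc2 : 0 < Real.cos (φ / 2) := Real.cos_pos_of_mem_Ioo ⟨by linarith [hφ.1], by linarith [hφ.2]⟩
  have hr : 0 < |θ - φ| := abs_pos.2 (sub_ne_zero.2 hne)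
  have hrp : |θ - φ| ≤ π := by
    rw [abs_le]; constructor <;> linarith [hθ.1, hφ.1, hθ.2, hφ.2]
  have hcos : Real.cos ((θ - φ) / 2) = Real.cos (|θ - φ| / 2) := by
    rw [← Real.cos_abs ((θ - φ) / 2), abs_div, abs_two]
  have hx := one_sub_cos_ge hr.le hrp
  rw [← hcos] at hx
  have hadd : Real.cos ((θ - φ) / 2) = Real.cos (θ / 2) * Real.cos (φ / 2) +
      Real.sin (θ / 2) * Real.sin (φ / 2) := by
    rw [← Real.cos_sub]; ring_nf
  set x := 1 - Real.cos ((θ - φ) / 2) with hxd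
  have hx0 : 0 < x := lt_of_lt_of_le (by positivity) hx
  set A := Real.sin (θ / 2) * Real.sin (φ / 2) with hA
  set B := Real.cos (θ / 2) * Real.cos (φ / 2) with hB
  have hxA : (θ + φ) ^ 2 / (8 * π ^ 2) ≤ x + A := by
    have := one_sub_cos_mul_ge hθ hφ
    rw [hxd, hadd]; linarith
  have hxB : ((π - θ) + (π - φ)) ^ 2 / (8 * π ^ 2) ≤ x + B := by
    have := one_sub_cos_mul_ge (x := π - θ) (y := π - φ) ⟨by linarith [hθ.2], by linarith [hθ.1]⟩
      ⟨by linarith [hφ.2], by linarith [hφ.1]⟩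
    have e1 : Real.cos ((π - θ) / 2) = Real.sin (θ / 2) := by
      rw [← Real.cos_pi_div_two_sub]; ring_nf
    have e2 : Real.cos ((π - φ) / 2) = Real.sin (φ / 2) := by
      rw [← Real.cos_pi_div_two_sub]; ring_nf
    rw [e1, e2, ← hA] at this
    rw [hxd, hadd]; linarith
  have hb := H x A B hx0 (by positivity) (by positivity)
  have hmu0 := jac_pos hα hβ hθ hφ hne
  have hp1 : 0 < θ + φ := by linarith [hθ.1, hφ.1]
  have hp2 : 0 < (π - θ) + (π - φ) := by linarith [hθ.2, hφ.2]
  have hmu : (jacobiMeasure α β (jacobiBall θ |θ - φ|)).toReal ≤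
      2 * |θ - φ| * ((θ + φ) ^ (2 * α + 1) * ((π - θ) + (π - φ)) ^ (2 * β + 1)) :=
    ENNReal.toReal_le_of_le_ofReal (by positivity) (jac_upper hα hβ hθ hφ)
  simp only [qfun_eq]
  refine hb.trans (ENNReal.ofReal_le_ofReal ?_)
  have b1 := rpow_sq_bound (p := 1 / 2) (by positivity) hr (by norm_num) hx
  have b2 := rpow_sq_bound (p := α + 1 / 2) (by positivity) hp1 (by linarith) hxA
  have b3 := rpow_sq_bound (p := β + 1 / 2) (by positivity) hp2 (by linarith) hxB
  rw [show 2 * (1 / 2 : ℝ) = 1 by norm_num, Real.rpow_one] at b1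
  rw [show 2 * (α + 1 / 2) = 2 * α + 1 by ring] at b2
  rw [show 2 * (β + 1 / 2) = 2 * β + 1 by ring] at b3
  have hA0 : 0 < A := by positivity
  have hB0 : 0 < B := by positivity
  calc C * (x ^ (-(1 / 2) : ℝ) * (x + A) ^ (-(α + 1 / 2)) * (x + B) ^ (-(β + 1 / 2)))
      ≤ C * (((2 * π ^ 2) ^ (1 / 2 : ℝ) * |θ - φ|⁻¹) *
        ((8 * π ^ 2) ^ (α + 1 / 2) * ((θ + φ) ^ (2 * α + 1))⁻¹) *
        ((8 * π ^ 2) ^ (β + 1 / 2) * (((π - θ) + (π - φ)) ^ (2 * β + 1))⁻¹)) := by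
        gcongr
    _ = C * M * 2 / (2 * |θ - φ| * ((θ + φ) ^ (2 * α + 1) * ((π - θ) + (π - φ)) ^ (2 * β + 1))) := by
        rw [hM]; field_simp
    _ ≤ _ := by gcongr

/-- The model integrals `∫ s^p (cosh(t/2) - 1 + s)^(-b) dν(s)`. -/
noncomputable def JJ (ν : Measure ℝ) (p : ℕ) (b t : ℝ) : ℝ :=
  ∫ s, s ^ p * (Real.cosh (t / 2) - 1 + s) ^ (-b) ∂ν

theorem rpow_le_add_of_mem {l D h y : ℝ} (hl : 0 < l) (h1 : l ≤ D) (h2 : D ≤ h) :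
    D ^ y ≤ l ^ y + h ^ y := by
  have hD : 0 < D := hl.trans_le h1
  have hh : 0 < h := hD.trans_le h2
  rcases le_total 0 y with hy | hy
  · have := Real.rpow_le_rpow hD.le h2 hy
    have := Real.rpow_nonneg hl.le y
    linarith
  · have := Real.rpow_le_rpow_of_nonpos hl h1 hy
    have := Real.rpow_nonneg hh.le y
    linarith

theorem JJ_bound {q0 s t T b : ℝ} (p : ℕ) (hq : 0 < q0) (hs : s ∈ Icc q0 2) (hT : |t| ≤ T) :
    |s ^ p * (Real.cosh (t / 2) - 1 + s) ^ (-b)| ≤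
      2 ^ p * (q0 ^ (-b) + (Real.cosh (T / 2) + 1) ^ (-b)) := by
  have hs0 : 0 < s := hq.trans_le hs.1
  have hE := Real.one_le_cosh (t / 2)
  have hD : 0 < Real.cosh (t / 2) - 1 + s := by linarith
  have hE2 : Real.cosh (t / 2) ≤ Real.cosh (T / 2) := by
    rw [Real.cosh_le_cosh, abs_div, abs_div]
    have := le_abs_self T
    exact div_le_div_of_nonneg_right (by linarith) (abs_nonneg _)
  rw [abs_of_nonneg (by positivity)]
  have := rpow_le_add_of_mem (y := -b) hq (by linarith [hs.1] : q0 ≤ Real.cosh (t / 2) - 1 + s)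
    (by linarith [hs.2] : _ ≤ Real.cosh (T / 2) + 1)
  have h2 : s ^ p ≤ 2 ^ p := pow_le_pow_left₀ hs0.le hs.2 p
  gcongr

theorem JJ_integrable {ν : Measure ℝ} [IsFiniteMeasure ν] {q0 : ℝ} (hq : 0 < q0)
    (hν : ∀ᵐ s ∂ν, s ∈ Icc q0 2) (p : ℕ) (b t : ℝ) :
    Integrable (fun s => s ^ p * (Real.cosh (t / 2) - 1 + s) ^ (-b)) ν := by
  refine Integrable.mono' (integrable_const
    (2 ^ p * (q0 ^ (-b) + (Real.cosh (|t| / 2) + 1) ^ (-b)))) ?_ ?_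
  · have : Measurable (fun s : ℝ => s ^ p * (Real.cosh (t / 2) - 1 + s) ^ (-b)) := by fun_prop
    exact this.aestronglyMeasurable
  · filter_upwards [hν] with s hs
    exact JJ_bound p hq hs le_rfl

theorem hasDerivAt_cosh_half (t : ℝ) :
    HasDerivAt (fun t : ℝ => Real.cosh (t / 2)) (Real.sinh (t / 2) / 2) t := by
  have := ((hasDerivAt_id t).div_const 2).cosh
  simpa [div_eq_mul_inv] using this

theorem hasDerivAt_sinh_half (t : ℝ) :
    HasDerivAt (fun t : ℝ => Real.sinh (t / 2)) (Real.cosh (t / 2) / 2) t := by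
  have := ((hasDerivAt_id t).div_const 2).sinh
  simpa [div_eq_mul_inv] using this

theorem JJ_hasDerivAt {ν : Measure ℝ} [IsFiniteMeasure ν] {q0 : ℝ} (hq : 0 < q0)
    (hν : ∀ᵐ s ∂ν, s ∈ Icc q0 2) (p : ℕ) (b t : ℝ) :
    HasDerivAt (JJ ν p b) (-b / 2 * Real.sinh (t / 2) * JJ ν p (b + 1) t) t := by
  set T := |t| + 1 with hT
  have hball : ∀ x ∈ Metric.ball t 1, |x| ≤ T := by
    intro x hx
    rw [Metric.mem_ball, Real.dist_eq] at hx
    have := abs_sub_abs_le_abs_sub x t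
    linarith
  have key := hasDerivAt_integral_of_dominated_loc_of_deriv_le (μ := ν) (x₀ := t)
    (s := Metric.ball t 1) (Metric.ball_mem_nhds t one_pos)
    (F := fun t s => s ^ p * (Real.cosh (t / 2) - 1 + s) ^ (-b))
    (F' := fun t s => -b / 2 * Real.sinh (t / 2) *
      (s ^ p * (Real.cosh (t / 2) - 1 + s) ^ (-(b + 1))))
    (bound := fun _ => |b| / 2 * Real.cosh (T / 2) *
      (2 ^ p * (q0 ^ (-(b + 1)) + (Real.cosh (T / 2) + 1) ^ (-(b + 1)))))
    (Filter.Eventually.of_forall fun x => (JJ_integrable hq hν p b x).aestronglyMeasurable)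
    (JJ_integrable hq hν p b t)
    ((JJ_integrable hq hν p (b + 1) t).const_mul _).aestronglyMeasurable
    ?_ (integrable_const _) ?_
  · have h2 := key.2
    rw [integral_const_mul] at h2
    exact h2
  · filter_upwards [hν] with s hs x hx
    have hb := JJ_bound (b := b + 1) p hq hs (hball x hx)
    rw [norm_mul, norm_mul, Real.norm_eq_abs, Real.norm_eq_abs, Real.norm_eq_abs]
    have h1 : |(-b / 2)| = |b| / 2 := by rw [abs_div, abs_neg, abs_two]
    have h2 : |Real.sinh (x / 2)| ≤ Real.cosh (T / 2) := by
      rw [Real.abs_sinh]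
      refine (Real.sinh_lt_cosh _).le.trans ?_
      rw [Real.cosh_le_cosh, abs_abs, abs_div, abs_div]
      have := hball x hx
      have := le_abs_self T
      exact div_le_div_of_nonneg_right (by linarith) (abs_nonneg _)
    have := Real.cosh_pos (T / 2)
    rw [h1]
    gcongr
  · filter_upwards [hν] with s hs x hx
    have hs0 : 0 < s := hq.trans_le hs.1
    have hE := Real.one_le_cosh (x / 2)
    have hD : 0 < Real.cosh (x / 2) - 1 + s := by linarith
    have h1 := ((((hasDerivAt_cosh_half x).sub_const 1).add_const s).rpow_const
      (p := -b) (Or.inl hD.ne')).const_mul (s ^ p)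
    refine h1.congr_deriv ?_
    rw [show -(b + 1) = -b - 1 by ring]
    ring

theorem JJ_contDiff {ν : Measure ℝ} [IsFiniteMeasure ν] {q0 : ℝ} (hq : 0 < q0)
    (hν : ∀ᵐ s ∂ν, s ∈ Icc q0 2) (p : ℕ) (n : ℕ) : ∀ b : ℝ, ContDiff ℝ n (JJ ν p b) := by
  induction n with
  | zero =>
    intro b
    simp only [Nat.cast_zero, contDiff_zero]
    exact continuous_iff_continuousAt.2 fun t => (JJ_hasDerivAt hq hν p b t).continuousAt
  | succ n ih =>
    intro b
    rw [Nat.cast_add, Nat.cast_one, contDiff_succ_iff_deriv]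
    refine ⟨fun t => (JJ_hasDerivAt hq hν p b t).differentiableAt, by simp, ?_⟩
    have : deriv (JJ ν p b) = fun t => -b / 2 * Real.sinh (t / 2) * JJ ν p (b + 1) t := by
      ext t; exact (JJ_hasDerivAt hq hν p b t).deriv
    rw [this]
    have h := ih (b + 1)
    have h2 : ContDiff ℝ n (fun t : ℝ => Real.sinh (t / 2)) := by fun_prop
    exact (contDiff_const.mul h2).mul h

/-- The model functions. -/
noncomputable def TT (ν : Measure ℝ) (p i j : ℕ) (b t : ℝ) : ℝ :=
  Real.sinh (t / 2) ^ i * Real.cosh (t / 2) ^ j * JJ ν p b t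

theorem TT_contDiff {ν : Measure ℝ} [IsFiniteMeasure ν] {q0 : ℝ} (hq : 0 < q0)
    (hν : ∀ᵐ s ∂ν, s ∈ Icc q0 2) (p i j : ℕ) (b : ℝ) (n : ℕ) : ContDiff ℝ n (TT ν p i j b) := by
  have h := JJ_contDiff hq hν p n b
  have h2 : ContDiff ℝ n (fun t : ℝ => Real.sinh (t / 2) ^ i * Real.cosh (t / 2) ^ j) := by fun_prop
  exact h2.mul h

theorem TT_deriv {ν : Measure ℝ} [IsFiniteMeasure ν] {q0 : ℝ} (hq : 0 < q0)
    (hν : ∀ᵐ s ∂ν, s ∈ Icc q0 2) (p i j : ℕ) (b : ℝ) :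
    deriv (TT ν p i j b) = fun t => ((i : ℝ) / 2 * TT ν p (i - 1) (j + 1) b t +
      (j : ℝ) / 2 * TT ν p (i + 1) (j - 1) b t) + -b / 2 * TT ν p (i + 1) j (b + 1) t := by
  ext t
  have h := (((hasDerivAt_sinh_half t).pow i).mul ((hasDerivAt_cosh_half t).pow j)).mul
    (JJ_hasDerivAt hq hν p b t)
  refine h.deriv.trans ?_
  simp only [TT, Pi.mul_apply, Pi.pow_apply]
  ring

theorem TT_base {ν : Measure ℝ} [IsFiniteMeasure ν] {q0 : ℝ} (hq : 0 < q0)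
    (hν : ∀ᵐ s ∂ν, s ∈ Icc q0 2) (p i j : ℕ) (b κ : ℝ) (hκ : κ ≤ i / 2 - b) (t : ℝ) (ht : 0 ≤ t) :
    |TT ν p i j b t| ≤ 2 ^ ((i : ℝ) - b - κ) *
      (JJ ν p (-κ) t * Real.cosh (t / 2) ^ ((i : ℝ) + j - b - κ)) := by
  have hE := Real.one_le_cosh (t / 2)
  have hE0 : 0 < Real.cosh (t / 2) := by linarith
  have hS : 0 ≤ Real.sinh (t / 2) := Real.sinh_nonneg_iff.2 (by linarith)
  have hJ : 0 ≤ JJ ν p b t := by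
    apply integral_nonneg_of_ae
    filter_upwards [hν] with s hs
    have hs0 : 0 < s := hq.trans_le hs.1
    have : 0 < Real.cosh (t / 2) - 1 + s := by linarith
    simp only [Pi.zero_apply]
    positivity
  rw [TT, abs_of_nonneg (by positivity), JJ, JJ, ← integral_const_mul, ← integral_mul_const,
    ← integral_const_mul]
  apply integral_mono_ae ((JJ_integrable hq hν p b t).const_mul _)
    (((JJ_integrable hq hν p (-κ) t).mul_const _).const_mul _)
  filter_upwards [hν] with s hs
  have hs0 : 0 < s := hq.trans_le hs.1
  set D := Real.cosh (t / 2) - 1 + s with hDd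
  have hD : 0 < D := by linarith
  set E := Real.cosh (t / 2) with hEd
  set S := Real.sinh (t / 2) with hSd
  have hDE : D ≤ 2 * E := by linarith [hs.2]
  have hSq : S ^ 2 ≤ D * (2 * E) := by
    have : S ^ 2 = (E - 1) * (E + 1) := by rw [hSd, Real.sinh_sq]; ring
    rw [this]
    apply mul_le_mul <;> linarith
  have hSi : S ^ i ≤ D ^ ((i : ℝ) / 2) * (2 * E) ^ ((i : ℝ) / 2) := by
    have e : S ^ i = (S ^ 2) ^ ((i : ℝ) / 2) := by
      rw [← Real.rpow_natCast, ← Real.rpow_natCast, ← Real.rpow_mul hS]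
      congr 1; push_cast; ring
    rw [e, ← Real.mul_rpow hD.le (by positivity)]
    exact Real.rpow_le_rpow (by positivity) hSq (by positivity)
  have hDp : D ^ ((i : ℝ) / 2 - b - κ) ≤ (2 * E) ^ ((i : ℝ) / 2 - b - κ) :=
    Real.rpow_le_rpow hD.le hDE (by linarith)
  have e1 : D ^ ((i : ℝ) / 2) * D ^ (-b) = D ^ ((i : ℝ) / 2 - b - κ) * D ^ κ := by
    rw [← Real.rpow_add hD, ← Real.rpow_add hD]; ring_nf
  have e2 : (2 * E) ^ ((i : ℝ) / 2 - b - κ) * (2 * E) ^ ((i : ℝ) / 2) * E ^ (j : ℝ) =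
      2 ^ ((i : ℝ) - b - κ) * E ^ ((i : ℝ) + j - b - κ) := by
    rw [← Real.rpow_add (by positivity), Real.mul_rpow (by norm_num) hE0.le, mul_assoc,
      ← Real.rpow_add hE0]
    ring_nf
  rw [← Real.rpow_natCast E j]
  simp only [neg_neg]
  calc S ^ i * E ^ (j : ℝ) * (s ^ p * D ^ (-b))
      ≤ (D ^ ((i : ℝ) / 2) * (2 * E) ^ ((i : ℝ) / 2)) * E ^ (j : ℝ) * (s ^ p * D ^ (-b)) := by
        gcongr
    _ = (D ^ ((i : ℝ) / 2) * D ^ (-b)) * ((2 * E) ^ ((i : ℝ) / 2) * E ^ (j : ℝ) * s ^ p) := by ring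
    _ = D ^ ((i : ℝ) / 2 - b - κ) * (D ^ κ * ((2 * E) ^ ((i : ℝ) / 2) * E ^ (j : ℝ) * s ^ p)) := by
        rw [e1]; ring
    _ ≤ (2 * E) ^ ((i : ℝ) / 2 - b - κ) *
        (D ^ κ * ((2 * E) ^ ((i : ℝ) / 2) * E ^ (j : ℝ) * s ^ p)) := by
        gcongr
    _ = ((2 * E) ^ ((i : ℝ) / 2 - b - κ) * (2 * E) ^ ((i : ℝ) / 2) * E ^ (j : ℝ)) *
        (s ^ p * D ^ κ) := by ring
    _ = _ := by rw [e2]; ring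

theorem TT_bound (m : ℕ) : ∀ (p i j : ℕ) (b κ : ℝ), κ ≤ i / 2 - b → ∃ C : ℝ, 0 ≤ C ∧
    ∀ (ν : Measure ℝ) [IsFiniteMeasure ν] (q0 : ℝ), 0 < q0 → (∀ᵐ s ∂ν, s ∈ Icc q0 2) →
      ∀ t : ℝ, 0 ≤ t → |iteratedDeriv m (TT ν p i j b) t| ≤
        C * (JJ ν p (-(κ - m / 2)) t *
          Real.cosh (t / 2) ^ ((i : ℝ) + j - b - (κ - m / 2))) := by
  induction m with
  | zero =>
    intro p i j b κ hκ
    refine ⟨2 ^ ((i : ℝ) - b - κ), by positivity, fun ν _ q0 hq hν t ht => ?_⟩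
    simpa using TT_base hq hν p i j b κ hκ t ht
  | succ m ih =>
    intro p i j b κ hκ
    -- first piece
    have H1 : ∃ C : ℝ, 0 ≤ C ∧
        ∀ (ν : Measure ℝ) [IsFiniteMeasure ν] (q0 : ℝ), 0 < q0 → (∀ᵐ s ∂ν, s ∈ Icc q0 2) →
        ∀ t : ℝ, 0 ≤ t → |(i : ℝ) / 2 * iteratedDeriv m (TT ν p (i - 1) (j + 1) b) t| ≤
        C * (JJ ν p (-(κ - (m + 1 : ℕ) / 2)) t *
          Real.cosh (t / 2) ^ ((i : ℝ) + j - b - (κ - (m + 1 : ℕ) / 2))) := by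
      rcases i with _ | i
      · exact ⟨0, le_rfl, fun ν _ q0 hq hν t ht => by simp⟩
      · obtain ⟨C, hC, H⟩ := ih p i (j + 1) b (κ - 1 / 2) (by push_cast at hκ; linarith)
        refine ⟨((i + 1 : ℕ) : ℝ) / 2 * C, by positivity, fun ν _ q0 hq hν t ht => ?_⟩
        have := H ν q0 hq hν t ht
        rw [abs_mul, abs_of_nonneg (by positivity), mul_assoc, Nat.add_sub_cancel]
        refine mul_le_mul_of_nonneg_left (this.trans (le_of_eq ?_)) (by positivity)
        push_cast
        ring_nf
    have H2 : ∃ C : ℝ, 0 ≤ C ∧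
        ∀ (ν : Measure ℝ) [IsFiniteMeasure ν] (q0 : ℝ), 0 < q0 → (∀ᵐ s ∂ν, s ∈ Icc q0 2) →
        ∀ t : ℝ, 0 ≤ t → |(j : ℝ) / 2 * iteratedDeriv m (TT ν p (i + 1) (j - 1) b) t| ≤
        C * (JJ ν p (-(κ - (m + 1 : ℕ) / 2)) t *
          Real.cosh (t / 2) ^ ((i : ℝ) + j - b - (κ - (m + 1 : ℕ) / 2))) := by
      rcases j with _ | j
      · exact ⟨0, le_rfl, fun ν _ q0 hq hν t ht => by simp⟩
      · obtain ⟨C, hC, H⟩ := ih p (i + 1) j b (κ - 1 / 2) (by push_cast; linarith)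
        refine ⟨((j + 1 : ℕ) : ℝ) / 2 * C, by positivity, fun ν _ q0 hq hν t ht => ?_⟩
        have := H ν q0 hq hν t ht
        rw [abs_mul, abs_of_nonneg (by positivity), mul_assoc, Nat.add_sub_cancel]
        refine mul_le_mul_of_nonneg_left (this.trans (le_of_eq ?_)) (by positivity)
        push_cast
        ring_nf
    have H3 : ∃ C : ℝ, 0 ≤ C ∧
        ∀ (ν : Measure ℝ) [IsFiniteMeasure ν] (q0 : ℝ), 0 < q0 → (∀ᵐ s ∂ν, s ∈ Icc q0 2) →
        ∀ t : ℝ, 0 ≤ t → |-b / 2 * iteratedDeriv m (TT ν p (i + 1) j (b + 1)) t| ≤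
        C * (JJ ν p (-(κ - (m + 1 : ℕ) / 2)) t *
          Real.cosh (t / 2) ^ ((i : ℝ) + j - b - (κ - (m + 1 : ℕ) / 2))) := by
      obtain ⟨C, hC, H⟩ := ih p (i + 1) j (b + 1) (κ - 1 / 2) (by push_cast; linarith)
      refine ⟨|-b / 2| * C, by positivity, fun ν _ q0 hq hν t ht => ?_⟩
      have := H ν q0 hq hν t ht
      rw [abs_mul, mul_assoc]
      refine mul_le_mul_of_nonneg_left (this.trans (le_of_eq ?_)) (by positivity)
      push_cast
      ring_nf
    obtain ⟨C1, hC1, H1⟩ := H1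
    obtain ⟨C2, hC2, H2⟩ := H2
    obtain ⟨C3, hC3, H3⟩ := H3
    refine ⟨C1 + C2 + C3, by positivity, fun ν _ q0 hq hν t ht => ?_⟩
    have a1 := H1 ν q0 hq hν t ht
    have a2 := H2 ν q0 hq hν t ht
    have a3 := H3 ν q0 hq hν t ht
    have c1 := (TT_contDiff hq hν p (i - 1) (j + 1) b m).contDiffAt (x := t)
    have c2 := (TT_contDiff hq hν p (i + 1) (j - 1) b m).contDiffAt (x := t)
    have c3 := (TT_contDiff hq hν p (i + 1) j (b + 1) m).contDiffAt (x := t)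
    rw [iteratedDeriv_succ', TT_deriv hq hν, iteratedDeriv_fun_add
      ((contDiffAt_const.mul c1).add (contDiffAt_const.mul c2)) (contDiffAt_const.mul c3),
      iteratedDeriv_fun_add (contDiffAt_const.mul c1) (contDiffAt_const.mul c2),
      iteratedDeriv_const_mul_field, iteratedDeriv_const_mul_field, iteratedDeriv_const_mul_field]
    refine (abs_add_le _ _).trans ?_
    have := abs_add_le ((i : ℝ) / 2 * iteratedDeriv m (TT ν p (i - 1) (j + 1) b) t)
      ((j : ℝ) / 2 * iteratedDeriv m (TT ν p (i + 1) (j - 1) b) t)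
    linarith

theorem TT_small {a : ℝ} (k₀ k : ℕ) (hk₀ : 1 ≤ k₀) (hk : k ≤ k₀) : ∃ C : ℝ, 0 ≤ C ∧
    ∀ (ν : Measure ℝ) [IsFiniteMeasure ν] (q0 : ℝ), 0 < q0 → (∀ᵐ s ∂ν, s ∈ Icc q0 2) →
      ∀ t : ℝ, 0 < t → t ≤ 1 → |iteratedDeriv (2 * k) (TT ν 0 1 0 a) t| * t ^ (2 * k₀ - 1) ≤
        C * (Real.sinh (t / 2) * JJ ν 0 (a + 1 / 2) t) := by
  obtain ⟨C, hC, H⟩ := TT_bound (2 * k) 0 1 0 a (1 / 2 - a) (by norm_num)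
  set E1 := Real.cosh 1 with hE1
  have hE10 : 0 < E1 := Real.cosh_pos 1
  set M := 2 * (E1 + 1 + 8 ^ k) with hM
  refine ⟨C * E1 ^ (1 / 2 + k : ℝ) * M, by positivity, fun ν _ q0 hq hν t ht ht1 => ?_⟩
  have h1 := H ν q0 hq hν t ht.le
  have e1 : -(1 / 2 - a - ((2 * k : ℕ) : ℝ) / 2) = a - 1 / 2 + k := by push_cast; ring
  have e2 : ((1 : ℕ) : ℝ) + ((0 : ℕ) : ℝ) - a - (1 / 2 - a - ((2 * k : ℕ) : ℝ) / 2) = 1 / 2 + k := by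
    push_cast; ring
  rw [e1, e2] at h1
  have hE := Real.one_le_cosh (t / 2)
  have hEE : Real.cosh (t / 2) ≤ E1 := by
    rw [hE1, Real.cosh_le_cosh, abs_of_pos (by positivity), abs_one]; linarith
  have hS : t / 2 ≤ Real.sinh (t / 2) := Real.self_le_sinh_iff.2 (by linarith)
  have hS0 : 0 < Real.sinh (t / 2) := by linarith
  have hcosh : t ^ 2 / 8 ≤ Real.cosh (t / 2) - 1 := by
    have h4 : t / 4 ≤ Real.sinh (t / 4) := Real.self_le_sinh_iff.2 (by linarith)
    have : Real.cosh (t / 2) = 1 + 2 * Real.sinh (t / 4) ^ 2 := by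
      rw [show t / 2 = 2 * (t / 4) by ring, Real.cosh_two_mul, Real.cosh_sq]; ring
    rw [this]; nlinarith
  have hJ : JJ ν 0 (a - 1 / 2 + k) t * t ^ (2 * k₀ - 1) ≤
      M * (Real.sinh (t / 2) * JJ ν 0 (a + 1 / 2) t) := by
    rw [JJ, JJ, ← integral_const_mul, ← integral_mul_const, ← integral_const_mul]
    apply integral_mono_ae ((JJ_integrable hq hν 0 _ t).mul_const _)
      (((JJ_integrable hq hν 0 _ t).const_mul _).const_mul _)
    filter_upwards [hν] with s hs
    have hs0 : 0 < s := hq.trans_le hs.1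
    set D := Real.cosh (t / 2) - 1 + s with hDd
    have hD : 0 < D := by linarith
    have key : D ^ (1 - k : ℝ) * t ^ (2 * k₀ - 1) ≤ M * Real.sinh (t / 2) := by
      rcases k with _ | k
      · have h2 : t ^ (2 * k₀ - 1) ≤ t ^ 1 := pow_le_pow_of_le_one ht.le ht1 (by omega)
        have h3 : D ≤ E1 + 1 := by linarith [hs.2]
        simp only [Nat.cast_zero, sub_zero, Real.rpow_one]
        calc D * t ^ (2 * k₀ - 1) ≤ (E1 + 1) * (2 * Real.sinh (t / 2)) := by
              apply mul_le_mul h3 (by linarith) (by positivity) (by positivity)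
          _ ≤ _ := by rw [hM]; simp only [pow_zero]; nlinarith
      · have h2 : t ^ (2 * k₀ - 1) ≤ t ^ (2 * k + 1) := pow_le_pow_of_le_one ht.le ht1 (by omega)
        have h3 : t ^ (2 * k + 1) ≤ (8 * D) ^ k * t := by
          rw [pow_succ, pow_mul]
          gcongr
          linarith
        have h4 : D ^ (1 - ((k + 1 : ℕ) : ℝ)) = (D ^ k)⁻¹ := by
          rw [← Real.rpow_natCast, ← Real.rpow_neg hD.le]; congr 1; push_cast; ring
        rw [h4]
        calc (D ^ k)⁻¹ * t ^ (2 * k₀ - 1) ≤ (D ^ k)⁻¹ * ((8 * D) ^ k * t) := by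
              gcongr; exact h2.trans h3
          _ = 8 ^ k * t := by rw [mul_pow]; field_simp
          _ ≤ 8 ^ (k + 1) * (2 * Real.sinh (t / 2)) := by
              gcongr
              · norm_num
              · linarith
              · linarith
          _ ≤ _ := by rw [hM]; nlinarith
    have e3 : D ^ (-(a - 1 / 2 + k)) = D ^ (1 - k : ℝ) * D ^ (-(a + 1 / 2)) := by
      rw [← Real.rpow_add hD]; ring_nf
    have hp : 0 < D ^ (-(a + 1 / 2)) := by positivity
    simp only [pow_zero, one_mul]
    rw [e3]
    nlinarith [mul_le_mul_of_nonneg_right key hp.le]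
  have hJ0 : 0 ≤ JJ ν 0 (a - 1 / 2 + k) t := by
    apply integral_nonneg_of_ae
    filter_upwards [hν] with s hs
    have hs0 : 0 < s := hq.trans_le hs.1
    have : 0 < Real.cosh (t / 2) - 1 + s := by linarith
    simp only [Pi.zero_apply]
    positivity
  calc _ ≤ C * (JJ ν 0 (a - 1 / 2 + k) t * Real.cosh (t / 2) ^ (1 / 2 + k : ℝ)) * t ^ (2 * k₀ - 1) := by
        gcongr
    _ ≤ C * (JJ ν 0 (a - 1 / 2 + k) t * E1 ^ (1 / 2 + k : ℝ)) * t ^ (2 * k₀ - 1) := by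
        gcongr
    _ = C * E1 ^ (1 / 2 + k : ℝ) * (JJ ν 0 (a - 1 / 2 + k) t * t ^ (2 * k₀ - 1)) := by ring
    _ ≤ C * E1 ^ (1 / 2 + k : ℝ) * (M * (Real.sinh (t / 2) * JJ ν 0 (a + 1 / 2) t)) := by gcongr
    _ = _ := by ring

theorem JJ_large (p : ℕ) {y z ε : ℝ} (hy : 0 ≤ y) (hz : z - y ≤ -ε) : ∃ C : ℝ, 0 ≤ C ∧
    ∀ (ν : Measure ℝ) [IsFiniteMeasure ν] (q0 : ℝ), 0 < q0 → (∀ᵐ s ∂ν, s ∈ Icc q0 2) →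
      ∀ t : ℝ, 1 ≤ t → JJ ν p y t * Real.cosh (t / 2) ^ z ≤
        C * (Real.cosh (t / 2) ^ (-ε) * ν.real univ) := by
  set c := 1 - (Real.cosh (1 / 2))⁻¹ with hc
  have h1 : 1 < Real.cosh (1 / 2) := Real.one_lt_cosh.2 (by norm_num)
  have hc0 : 0 < c := by
    have := inv_lt_one_of_one_lt₀ h1
    rw [hc]; linarith
  refine ⟨2 ^ p * c ^ (-y), by positivity, fun ν _ q0 hq hν t ht => ?_⟩
  have hE := Real.one_le_cosh (t / 2)
  have hE0 : 0 < Real.cosh (t / 2) := by linarith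
  have hEE : Real.cosh (1 / 2) ≤ Real.cosh (t / 2) := by
    rw [Real.cosh_le_cosh, abs_of_pos (by positivity), abs_of_pos (by positivity)]; linarith
  set E := Real.cosh (t / 2) with hEd
  have hcE : c * E ≤ E - 1 := by
    have : 1 ≤ (Real.cosh (1 / 2))⁻¹ * E := by
      rw [← div_eq_inv_mul, one_le_div (by linarith)]; exact hEE
    rw [hc]; linarith
  have hJ : JJ ν p y t ≤ 2 ^ p * (c ^ (-y) * E ^ (-y)) * ν.real univ := by
    rw [JJ]
    calc _ ≤ ∫ s, 2 ^ p * (c ^ (-y) * E ^ (-y)) ∂ν := by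
          apply integral_mono_ae (JJ_integrable hq hν p y t) (integrable_const _)
          filter_upwards [hν] with s hs
          have hs0 : 0 < s := hq.trans_le hs.1
          rw [← hEd, ← Real.mul_rpow hc0.le hE0.le]
          have h2 : (E - 1 + s) ^ (-y) ≤ (c * E) ^ (-y) :=
            Real.rpow_le_rpow_of_nonpos (by positivity) (by linarith) (by linarith)
          have h3 : s ^ p ≤ 2 ^ p := pow_le_pow_left₀ hs0.le hs.2 p
          have : 0 < E - 1 + s := by linarith
          gcongr
      _ = _ := by rw [integral_const, smul_eq_mul]; ring
  have hEz : E ^ (-y) * E ^ z ≤ E ^ (-ε) := by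
    rw [← Real.rpow_add hE0]
    exact Real.rpow_le_rpow_of_exponent_le hE (by linarith)
  have hn : 0 ≤ ν.real univ := measureReal_nonneg
  calc _ ≤ 2 ^ p * (c ^ (-y) * E ^ (-y)) * ν.real univ * E ^ z := by gcongr
    _ = 2 ^ p * c ^ (-y) * ((E ^ (-y) * E ^ z) * ν.real univ) := by ring
    _ ≤ _ := by gcongr

theorem TT_large_gen (m p i j : ℕ) (b κ ε : ℝ) (hκ : κ ≤ i / 2 - b) (hκ0 : κ ≤ 0)
    (hε : (i : ℝ) + j - b ≤ -ε) : ∃ C : ℝ, 0 ≤ C ∧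
    ∀ (ν : Measure ℝ) [IsFiniteMeasure ν] (q0 : ℝ), 0 < q0 → (∀ᵐ s ∂ν, s ∈ Icc q0 2) →
      ∀ t : ℝ, 1 ≤ t → |iteratedDeriv m (TT ν p i j b) t| ≤
        C * (Real.cosh (t / 2) ^ (-ε) * ν.real univ) := by
  obtain ⟨C, hC, H⟩ := TT_bound m p i j b κ hκ
  obtain ⟨C', hC', H'⟩ := JJ_large p (y := -(κ - m / 2))
    (z := (i : ℝ) + j - b - (κ - m / 2)) (ε := ε)
    (by have : (0:ℝ) ≤ m := by positivity
        linarith) (by linarith)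
  refine ⟨C * C', by positivity, fun ν _ q0 hq hν t ht => ?_⟩
  refine (H ν q0 hq hν t (by linarith)).trans ?_
  rw [mul_assoc]
  exact mul_le_mul_of_nonneg_left (H' ν q0 hq hν t ht) hC

theorem TT_crit {ν : Measure ℝ} [IsFiniteMeasure ν] {q0 : ℝ} (hq : 0 < q0)
    (hν : ∀ᵐ s ∂ν, s ∈ Icc q0 2) :
    deriv (TT ν 0 1 0 1) = fun t => (-(1 / 2) * TT ν 0 0 0 1 t + 1 / 2 * TT ν 1 0 0 2 t) +
      1 / 2 * TT ν 1 0 1 2 t := by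
  rw [TT_deriv hq hν]
  ext t
  have hE := Real.one_le_cosh (t / 2)
  have hJ : JJ ν 0 1 t = (Real.cosh (t / 2) - 1) * JJ ν 0 2 t + JJ ν 1 2 t := by
    rw [JJ, JJ, JJ, ← integral_const_mul, ← integral_add
      ((JJ_integrable hq hν 0 2 t).const_mul _) (JJ_integrable hq hν 1 2 t)]
    apply integral_congr_ae
    filter_upwards [hν] with s hs
    have hs0 : 0 < s := hq.trans_le hs.1
    have hD : 0 < Real.cosh (t / 2) - 1 + s := by linarith
    have e : (Real.cosh (t / 2) - 1 + s) ^ (-1 : ℝ) =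
        (Real.cosh (t / 2) - 1 + s) * (Real.cosh (t / 2) - 1 + s) ^ (-2 : ℝ) := by
      nth_rewrite 2 [← Real.rpow_one (Real.cosh (t / 2) - 1 + s)]
      rw [← Real.rpow_add hD]; norm_num
    rw [e]; ring
  have hsq := Real.sinh_sq (t / 2)
  simp only [TT, Nat.cast_one, Nat.cast_zero, Nat.reduceAdd, Nat.reduceSub, pow_zero, pow_one]
  rw [show (1 : ℝ) + 1 = 2 by norm_num, hsq]
  linear_combination (1 / 2 * (Real.cosh (t / 2) + 1)) * hJ

theorem TT_large {a : ℝ} (ha : 1 ≤ a) (k : ℕ) (hk : a = 1 → 1 ≤ k) : ∃ C ε : ℝ, 0 ≤ C ∧ 0 < ε ∧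
    ∀ (ν : Measure ℝ) [IsFiniteMeasure ν] (q0 : ℝ), 0 < q0 → (∀ᵐ s ∂ν, s ∈ Icc q0 2) →
      ∀ t : ℝ, 1 ≤ t → |iteratedDeriv (2 * k) (TT ν 0 1 0 a) t| ≤
        C * (Real.cosh (t / 2) ^ (-ε) * ν.real univ) := by
  rcases ha.eq_or_lt with h | h
  · subst h
    obtain ⟨k, rfl⟩ : ∃ k', k = k' + 1 := ⟨k - 1, by have := hk rfl; omega⟩
    obtain ⟨C1, hC1, H1⟩ := TT_large_gen (2 * k + 1) 0 0 0 1 (-1) 1 (by norm_num) (by norm_num)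
      (by norm_num)
    obtain ⟨C2, hC2, H2⟩ := TT_large_gen (2 * k + 1) 1 0 0 2 (-2) 1 (by norm_num) (by norm_num)
      (by norm_num)
    obtain ⟨C3, hC3, H3⟩ := TT_large_gen (2 * k + 1) 1 0 1 2 (-2) 1 (by norm_num) (by norm_num)
      (by norm_num)
    refine ⟨C1 + C2 + C3, 1, by positivity, one_pos, fun ν _ q0 hq hν t ht => ?_⟩
    have a1 := H1 ν q0 hq hν t ht
    have a2 := H2 ν q0 hq hν t ht
    have a3 := H3 ν q0 hq hν t ht
    have c1 := (TT_contDiff hq hν 0 0 0 1 (2 * k + 1)).contDiffAt (x := t)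
    have c2 := (TT_contDiff hq hν 1 0 0 2 (2 * k + 1)).contDiffAt (x := t)
    have c3 := (TT_contDiff hq hν 1 0 1 2 (2 * k + 1)).contDiffAt (x := t)
    rw [show 2 * (k + 1) = 2 * k + 1 + 1 by ring, iteratedDeriv_succ', TT_crit hq hν,
      iteratedDeriv_fun_add
      ((contDiffAt_const.mul c1).add (contDiffAt_const.mul c2)) (contDiffAt_const.mul c3),
      iteratedDeriv_fun_add (contDiffAt_const.mul c1) (contDiffAt_const.mul c2),
      iteratedDeriv_const_mul_field, iteratedDeriv_const_mul_field, iteratedDeriv_const_mul_field]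
    set X := iteratedDeriv (2 * k + 1) (TT ν 0 0 0 1) t
    set Y := iteratedDeriv (2 * k + 1) (TT ν 1 0 0 2) t
    set Z := iteratedDeriv (2 * k + 1) (TT ν 1 0 1 2) t
    rw [add_mul, add_mul]
    have := abs_le.1 a1
    have := abs_le.1 a2
    have := abs_le.1 a3
    rw [abs_le]
    constructor <;> linarith
  · obtain ⟨C, hC, H⟩ := TT_large_gen (2 * k) 0 1 0 a (1 / 2 - a) (a - 1) (by norm_num)
      (by linarith) (by norm_num)
    exact ⟨C, a - 1, hC, by linarith, H⟩

theorem int_small {a s : ℝ} (ha : 1 ≤ a) (hs : 0 < s) :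
    ∫⁻ t in Ioo (0:ℝ) 1, ENNReal.ofReal (Real.sinh (t / 2) *
      (s ^ 0 * (Real.cosh (t / 2) - 1 + s) ^ (-(a + 1 / 2)))) ≤
      ENNReal.ofReal (2 / (a - 1 / 2)) * ENNReal.ofReal (s ^ (-(a - 1 / 2))) := by
  have ha' : 0 < a - 1 / 2 := by linarith
  have hD : ∀ t : ℝ, 0 < Real.cosh (t / 2) - 1 + s := fun t => by
    have := Real.one_le_cosh (t / 2)
    linarith
  rw [lint_ftc (G := fun t => -(2 / (a - 1 / 2) *
    (Real.cosh (t / 2) - 1 + s) ^ (-(a - 1 / 2)))) zero_le_one,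
    ← ENNReal.ofReal_mul (by positivity)]
  · apply ENNReal.ofReal_le_ofReal
    have := hD 1
    have h0 : 0 ≤ 2 / (a - 1 / 2) * (Real.cosh (1 / 2) - 1 + s) ^ (-(a - 1 / 2)) := by positivity
    simp only [zero_div, Real.cosh_zero, sub_self, zero_add]
    linarith
  · apply Continuous.continuousOn
    refine (continuous_const.mul (Continuous.rpow_const (by fun_prop) fun t => ?_)).neg
    exact Or.inl (hD t).ne'
  · intro t _
    have h1 := (((((hasDerivAt_cosh_half t).sub_const 1).add_const s).rpow_const
      (p := -(a - 1 / 2)) (Or.inl (hD t).ne')).const_mul (2 / (a - 1 / 2))).neg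
    refine h1.congr_deriv ?_
    rw [show -(a - 1 / 2) - 1 = -(a + 1 / 2) by ring]
    have hne : 2 / (a - 1 / 2) * (a - 1 / 2) = 2 := div_mul_cancel₀ _ ha'.ne'
    simp only [pow_zero, one_mul]
    linear_combination (1 / 2 * Real.sinh (t / 2) *
      (Real.cosh (t / 2) - 1 + s) ^ (-(a + 1 / 2))) * hne
  · intro t ht
    have := hD t
    have : 0 < Real.sinh (t / 2) := Real.sinh_pos_iff.2 (by linarith [ht.1])
    positivity

theorem int_large {ε : ℝ} (hε : 0 < ε) (n : ℕ) :
    ∫⁻ t in Ici (1:ℝ), ENNReal.ofReal (Real.cosh (t / 2) ^ (-ε) * t ^ n) ≠ ⊤ := by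
  have hi := integrableOn_rpow_mul_exp_neg_mul_rpow (s := n) (p := 1) (b := ε / 2)
    (by have : (0:ℝ) ≤ n := by positivity
        linarith) one_pos (by positivity)
  have hi2 := (hi.const_mul (2 ^ ε)).lintegral_lt_top
  refine ne_top_of_le_ne_top hi2.ne ?_
  refine le_trans ?_ (lintegral_mono_set (Ici_subset_Ioi.2 one_pos))
  apply setLIntegral_mono' measurableSet_Ici
  intro t ht
  have ht' : (1:ℝ) ≤ t := ht
  apply ENNReal.ofReal_le_ofReal
  have h1 : Real.exp (t / 2) / 2 ≤ Real.cosh (t / 2) := by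
    rw [Real.cosh_eq]
    have := Real.exp_pos (-(t / 2))
    linarith
  have h2 : Real.cosh (t / 2) ^ (-ε) ≤ 2 ^ ε * Real.exp (-(ε / 2) * t) := by
    refine (Real.rpow_le_rpow_of_nonpos (by positivity) h1 (by linarith)).trans (le_of_eq ?_)
    rw [Real.div_rpow (Real.exp_pos _).le (by norm_num), ← Real.exp_mul,
      Real.rpow_neg (by norm_num), div_inv_eq_mul, mul_comm]
    congr 2; ring
  rw [Real.rpow_one, Real.rpow_natCast]
  calc _ ≤ 2 ^ ε * Real.exp (-(ε / 2) * t) * t ^ n := by gcongr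
    _ = _ := by ring

theorem TT_total {a : ℝ} (ha : 1 ≤ a) (k₀ k : ℕ) (hk₀ : 1 ≤ k₀) (hk : k ≤ k₀)
    (hcrit : a = 1 → 1 ≤ k) : ∃ C : ℝ, 0 ≤ C ∧
    ∀ (ν : Measure ℝ) [IsFiniteMeasure ν] (q0 : ℝ), 0 < q0 → (∀ᵐ s ∂ν, s ∈ Icc q0 2) →
      ∫⁻ t in Ioi (0:ℝ), ‖iteratedDeriv (2 * k) (TT ν 0 1 0 a) t * t ^ (2 * k₀ - 1)‖ₑ ≤
        ENNReal.ofReal C * ∫⁻ s, ENNReal.ofReal (s ^ (-(a - 1 / 2))) ∂ν := by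
  obtain ⟨C1, hC1, H1⟩ := TT_small (a := a) k₀ k hk₀ hk
  obtain ⟨C2, ε, hC2, hε, H2⟩ := TT_large ha k hcrit
  have hL := int_large hε (2 * k₀ - 1)
  set L := (∫⁻ t in Ici (1:ℝ), ENNReal.ofReal (Real.cosh (t / 2) ^ (-ε) * t ^ (2 * k₀ - 1))).toReal
    with hLd
  have hL0 : 0 ≤ L := ENNReal.toReal_nonneg
  have ha' : 0 < a - 1 / 2 := by linarith
  refine ⟨C1 * (2 / (a - 1 / 2)) + C2 * L * 2 ^ (a - 1 / 2), by positivity,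
    fun ν _ q0 hq hν => ?_⟩
  set I := ∫⁻ s, ENNReal.ofReal (s ^ (-(a - 1 / 2))) ∂ν with hI
  have hsmall : ∫⁻ t in Ioo (0:ℝ) 1,
      ‖iteratedDeriv (2 * k) (TT ν 0 1 0 a) t * t ^ (2 * k₀ - 1)‖ₑ ≤
      ENNReal.ofReal C1 * (ENNReal.ofReal (2 / (a - 1 / 2)) * I) := by
    calc _ ≤ ∫⁻ t in Ioo (0:ℝ) 1, ENNReal.ofReal C1 * ∫⁻ s, ENNReal.ofReal (Real.sinh (t / 2) *
        (s ^ 0 * (Real.cosh (t / 2) - 1 + s) ^ (-(a + 1 / 2)))) ∂ν := by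
          apply setLIntegral_mono' measurableSet_Ioo
          intro t ht
          have hS : 0 < Real.sinh (t / 2) := Real.sinh_pos_iff.2 (by linarith [ht.1])
          have h1 := H1 ν q0 hq hν t ht.1 ht.2.le
          rw [← ofReal_integral_eq_lintegral_ofReal
            ((JJ_integrable hq hν 0 (a + 1 / 2) t).const_mul _),
            integral_const_mul, ← ENNReal.ofReal_mul hC1, Real.enorm_eq_ofReal_abs, abs_mul,
            abs_of_nonneg (pow_nonneg ht.1.le _)]
          · exact ENNReal.ofReal_le_ofReal h1
          · filter_upwards [hν] with s hs
            have hs0 : 0 < s := hq.trans_le hs.1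
            have hE := Real.one_le_cosh (t / 2)
            have : 0 < Real.cosh (t / 2) - 1 + s := by linarith
            simp only [Pi.zero_apply]
            positivity
      _ = ENNReal.ofReal C1 * ∫⁻ t in Ioo (0:ℝ) 1, ∫⁻ s, ENNReal.ofReal (Real.sinh (t / 2) *
        (s ^ 0 * (Real.cosh (t / 2) - 1 + s) ^ (-(a + 1 / 2)))) ∂ν :=
          lintegral_const_mul' _ _ ENNReal.ofReal_ne_top
      _ = ENNReal.ofReal C1 * ∫⁻ s, (∫⁻ t in Ioo (0:ℝ) 1, ENNReal.ofReal (Real.sinh (t / 2) *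
        (s ^ 0 * (Real.cosh (t / 2) - 1 + s) ^ (-(a + 1 / 2))))) ∂ν := by
          rw [lintegral_lintegral_swap]
          apply Measurable.aemeasurable
          simp only [Function.uncurry_def]
          have h1 : Measurable (fun x : ℝ × ℝ => Real.sinh (x.1 / 2)) :=
            Real.measurable_sinh.comp (measurable_fst.div_const 2)
          have h2 : Measurable (fun x : ℝ × ℝ => Real.cosh (x.1 / 2)) :=
            Real.measurable_cosh.comp (measurable_fst.div_const 2)
          fun_prop
      _ ≤ ENNReal.ofReal C1 * ∫⁻ s, ENNReal.ofReal (2 / (a - 1 / 2)) *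
          ENNReal.ofReal (s ^ (-(a - 1 / 2))) ∂ν := by
          refine mul_le_mul_right ?_ _
          apply lintegral_mono_ae
          filter_upwards [hν] with s hs
          exact int_small ha (hq.trans_le hs.1)
      _ = _ := by rw [lintegral_const_mul' _ _ ENNReal.ofReal_ne_top]
  have hmass : ν univ ≤ ENNReal.ofReal (2 ^ (a - 1 / 2)) * I := by
    rw [hI, ← lintegral_const_mul' _ _ ENNReal.ofReal_ne_top, ← lintegral_one]
    apply lintegral_mono_ae
    filter_upwards [hν] with s hs
    have hs0 : 0 < s := hq.trans_le hs.1
    rw [← ENNReal.ofReal_mul (by positivity), ← ENNReal.ofReal_one]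
    apply ENNReal.ofReal_le_ofReal
    have h1 : (2:ℝ) ^ (-(a - 1 / 2)) ≤ s ^ (-(a - 1 / 2)) :=
      Real.rpow_le_rpow_of_nonpos hs0 hs.2 (by linarith)
    calc (1:ℝ) = 2 ^ (a - 1 / 2) * 2 ^ (-(a - 1 / 2)) := by
          rw [← Real.rpow_add (by norm_num)]; simp
      _ ≤ _ := by gcongr
  have hlarge : ∫⁻ t in Ici (1:ℝ),
      ‖iteratedDeriv (2 * k) (TT ν 0 1 0 a) t * t ^ (2 * k₀ - 1)‖ₑ ≤
      ENNReal.ofReal C2 * ENNReal.ofReal L * (ENNReal.ofReal (2 ^ (a - 1 / 2)) * I) := by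
    calc _ ≤ ∫⁻ t in Ici (1:ℝ), (ENNReal.ofReal C2 * ν univ) *
          ENNReal.ofReal (Real.cosh (t / 2) ^ (-ε) * t ^ (2 * k₀ - 1)) := by
          apply setLIntegral_mono' measurableSet_Ici
          intro t ht
          have ht' : (1:ℝ) ≤ t := ht
          have h1 := H2 ν q0 hq hν t ht
          rw [← ofReal_measureReal (μ := ν) (s := univ), ← ENNReal.ofReal_mul hC2,
            ← ENNReal.ofReal_mul (mul_nonneg hC2 measureReal_nonneg), Real.enorm_eq_ofReal_abs,
            abs_mul, abs_of_nonneg (a := t ^ (2 * k₀ - 1)) (by positivity)]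
          apply ENNReal.ofReal_le_ofReal
          calc _ ≤ C2 * (Real.cosh (t / 2) ^ (-ε) * ν.real univ) * t ^ (2 * k₀ - 1) := by gcongr
            _ = _ := by ring
      _ = (ENNReal.ofReal C2 * ν univ) * ENNReal.ofReal L := by
          rw [lintegral_const_mul' _ _ (ENNReal.mul_ne_top ENNReal.ofReal_ne_top
            (measure_ne_top ν univ)), hLd, ENNReal.ofReal_toReal hL]
      _ ≤ (ENNReal.ofReal C2 * (ENNReal.ofReal (2 ^ (a - 1 / 2)) * I)) * ENNReal.ofReal L := by
          gcongr
      _ = _ := by ring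
  rw [← Ioo_union_Ici_eq_Ioi (zero_lt_one' ℝ)]
  refine (lintegral_union_le _ _ _).trans ((add_le_add hsmall hlarge).trans (le_of_eq ?_))
  rw [ENNReal.ofReal_add (by positivity) (by positivity), ENNReal.ofReal_mul hC1,
    ENNReal.ofReal_mul (by positivity), ENNReal.ofReal_mul hC2]
  ring

/-- The push-forward of `Π_α ⊗ Π_β` under `q(θ,φ,·,·)`. -/
noncomputable def qMeasure (α β θ φ : ℝ) : Measure ℝ :=
  ((PiMeasure α).prod (PiMeasure β)).map (fun x => qfun θ φ x.1 x.2)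

theorem qfun_measurable (θ φ : ℝ) : Measurable (fun x : ℝ × ℝ => qfun θ φ x.1 x.2) := by
  unfold qfun
  fun_prop

theorem qMeasure_finite {α β : ℝ} (hα : -(1 / 2) ≤ α) (hβ : -(1 / 2) ≤ β) (θ φ : ℝ) :
    IsFiniteMeasure (qMeasure α β θ φ) := by
  have := PiMeasure_finite hα
  have := PiMeasure_finite hβ
  unfold qMeasure
  infer_instance

theorem qMeasure_ae {α β : ℝ} (hα : -(1 / 2) ≤ α) (hβ : -(1 / 2) ≤ β) {θ φ : ℝ}
    (hθ : θ ∈ Ioo 0 π) (hφ : φ ∈ Ioo 0 π) :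
    ∀ᵐ s ∂(qMeasure α β θ φ), s ∈ Icc (1 - Real.cos ((θ - φ) / 2)) 2 := by
  have := PiMeasure_finite hα
  have := PiMeasure_finite hβ
  rw [qMeasure]
  refine (ae_map_iff (qfun_measurable θ φ).aemeasurable
    (p := fun s => s ∈ Icc (1 - Real.cos ((θ - φ) / 2)) 2) measurableSet_Icc).2 ?_
  have h1 : ∀ᵐ x ∂(PiMeasure α).prod (PiMeasure β), x.1 ∈ Icc (-1:ℝ) 1 :=
    Measure.quasiMeasurePreserving_fst.ae PiMeasure_ae
  have h2 : ∀ᵐ x ∂(PiMeasure α).prod (PiMeasure β), x.2 ∈ Icc (-1:ℝ) 1 :=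
    Measure.quasiMeasurePreserving_snd.ae PiMeasure_ae
  have hπ := Real.pi_pos
  have hs1 : 0 < Real.sin (θ / 2) := Real.sin_pos_of_pos_of_lt_pi (by linarith [hθ.1]) (by linarith [hθ.2])
  have hs2 : 0 < Real.sin (φ / 2) := Real.sin_pos_of_pos_of_lt_pi (by linarith [hφ.1]) (by linarith [hφ.2])
  have hc1 : 0 < Real.cos (θ / 2) := Real.cos_pos_of_mem_Ioo ⟨by linarith [hθ.1], by linarith [hθ.2]⟩
  have hc2 : 0 < Real.cos (φ / 2) := Real.cos_pos_of_mem_Ioo ⟨by linarith [hφ.1], by linarith [hφ.2]⟩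
  filter_upwards [h1, h2] with x hx1 hx2
  have hadd : Real.cos ((θ - φ) / 2) = Real.cos (θ / 2) * Real.cos (φ / 2) +
      Real.sin (θ / 2) * Real.sin (φ / 2) := by
    rw [← Real.cos_sub]; ring_nf
  have hle := Real.cos_le_one ((θ - φ) / 2)
  have hA := mul_pos hs1 hs2
  have hB := mul_pos hc1 hc2
  rw [qfun_eq]
  set A := Real.sin (θ / 2) * Real.sin (φ / 2)
  set B := Real.cos (θ / 2) * Real.cos (φ / 2)
  have u1 : 0 ≤ (1 - x.1) * A := mul_nonneg (by linarith [hx1.2]) hA.le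
  have u2 : 0 ≤ (1 - x.2) * B := mul_nonneg (by linarith [hx2.2]) hB.le
  have u3 : 0 ≤ (1 + x.1) * A := mul_nonneg (by linarith [hx1.1]) hA.le
  have u4 : 0 ≤ (1 + x.2) * B := mul_nonneg (by linarith [hx2.1]) hB.le
  constructor <;> linarith

theorem Hker_eq {α β : ℝ} (hα : -(1 / 2) ≤ α) (hβ : -(1 / 2) ≤ β) {θ φ : ℝ}
    (hθ : θ ∈ Ioo 0 π) (hφ : φ ∈ Ioo 0 π) (hq : 0 < 1 - Real.cos ((θ - φ) / 2)) :
    (fun t => Hker α β t θ φ) = fun t =>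
      ((2 : ℝ) ^ (-(α + β + 2)) / (jacobiMeasure α β (Ioo 0 π)).toReal) *
        TT (qMeasure α β θ φ) 0 1 0 (α + β + 2) t := by
  have i1 := PiMeasure_finite hα
  have i2 := PiMeasure_finite hβ
  have i3 := qMeasure_finite hα hβ θ φ
  have hae := qMeasure_ae hα hβ hθ hφ
  ext t
  rw [Hker, TT, pow_one, pow_zero, mul_one, mul_assoc]
  congr 2
  have hIntg := JJ_integrable hq hae 0 (α + β + 2) t
  rw [JJ]
  have hm : AEStronglyMeasurable (fun s : ℝ => s ^ 0 * (Real.cosh (t / 2) - 1 + s) ^ (-(α + β + 2)))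
      (qMeasure α β θ φ) := hIntg.aestronglyMeasurable
  rw [qMeasure] at hm hIntg hae ⊢
  rw [integral_map (qfun_measurable θ φ).aemeasurable hm]
  have hIntg2 := (integrable_map_measure hm (qfun_measurable θ φ).aemeasurable).1 hIntg
  refine Eq.trans ?_ (integral_prod _ hIntg2).symm
  have hae2 := ae_of_ae_map (qfun_measurable θ φ).aemeasurable hae
  have hae3 := Measure.ae_ae_of_ae_prod hae2
  apply integral_congr_ae
  filter_upwards [hae3] with u hu
  apply integral_congr_ae
  filter_upwards [hu] with v hv
  have hE := Real.one_le_cosh (t / 2)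
  have hD : 0 ≤ Real.cosh (t / 2) - 1 + qfun θ φ u v := by
    have := hv.1
    linarith
  simp only [Function.comp_apply]
  rw [Real.rpow_neg hD, pow_zero, one_mul, one_div]


/-- growth estimate for the kernels `S_k^{α,β}`. -/
theorem Sk_growth (α β : ℝ) (hα : -(1 / 2) ≤ α) (hβ : -(1 / 2) ≤ β)
    (k₀ k : ℕ) (hk₀ : 1 ≤ k₀) (hk : k ≤ k₀) (hcrit : α + β = -1 → 1 ≤ k) :
    ∃ C : ℝ, 0 < C ∧
      ∀ θ ∈ Ioo (0 : ℝ) π, ∀ φ ∈ Ioo (0 : ℝ) π, θ ≠ φ →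
        |∫ t in Ioi (0 : ℝ),
            iteratedDeriv (2 * k) (fun t' => Hker α β t' θ φ) t * t ^ (2 * k₀ - 1)|
          ≤ C / (jacobiMeasure α β (jacobiBall θ |θ - φ|)).toReal := by
  obtain ⟨C1, hC1, H1⟩ := TT_total (a := α + β + 2) (by linarith) k₀ k hk₀ hk
    (fun h => hcrit (by linarith))
  obtain ⟨C2, hC2, H2⟩ := ker_mu hα hβ
  set c := (2 : ℝ) ^ (-(α + β + 2)) / (jacobiMeasure α β (Ioo 0 π)).toReal with hc
  refine ⟨|c| * C1 * C2 + 1, by positivity, fun θ hθ φ hφ hne => ?_⟩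
  have i1 := PiMeasure_finite hα
  have i2 := PiMeasure_finite hβ
  have i3 := qMeasure_finite hα hβ θ φ
  have hmu := jac_pos hα hβ hθ hφ hne
  have hq : 0 < 1 - Real.cos ((θ - φ) / 2) := by
    have hr : 0 < |θ - φ| := abs_pos.2 (sub_ne_zero.2 hne)
    have hrp : |θ - φ| ≤ π := by
      rw [abs_le]; constructor <;> linarith [hθ.1, hφ.1, hθ.2, hφ.2]
    have hcos : Real.cos ((θ - φ) / 2) = Real.cos (|θ - φ| / 2) := by
      rw [← Real.cos_abs ((θ - φ) / 2), abs_div, abs_two]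
    have hx := one_sub_cos_ge hr.le hrp
    rw [← hcos] at hx
    have := Real.pi_pos
    exact lt_of_lt_of_le (by positivity) hx
  have hae := qMeasure_ae hα hβ hθ hφ
  have hH := Hker_eq hα hβ hθ hφ hq
  rw [hH, ← hc]
  have hT := H1 (qMeasure α β θ φ) _ hq hae
  set μB := (jacobiMeasure α β (jacobiBall θ |θ - φ|)).toReal with hμB
  have hker : ∫⁻ s, ENNReal.ofReal (s ^ (-(α + β + 2 - 1 / 2))) ∂(qMeasure α β θ φ) ≤
      ENNReal.ofReal (C2 / μB) := by
    rw [qMeasure, lintegral_map (by fun_prop) (qfun_measurable θ φ), lintegral_prod]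
    · rw [show α + β + 2 - 1 / 2 = α + β + 3 / 2 by ring]
      exact H2 θ hθ φ hφ hne
    · have := qfun_measurable θ φ
      apply Measurable.aemeasurable
      fun_prop
  simp only [iteratedDeriv_const_mul_field, mul_assoc]
  rw [integral_const_mul, abs_mul]
  have hle : |∫ t in Ioi (0 : ℝ), iteratedDeriv (2 * k)
      (TT (qMeasure α β θ φ) 0 1 0 (α + β + 2)) t * t ^ (2 * k₀ - 1)| ≤ C1 * (C2 / μB) := by
    have h1 := (enorm_integral_le_lintegral_enorm (μ := volume.restrict (Ioi (0:ℝ)))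
      (fun t => iteratedDeriv (2 * k)
      (TT (qMeasure α β θ φ) 0 1 0 (α + β + 2)) t * t ^ (2 * k₀ - 1))).trans
      (hT.trans (mul_le_mul_right hker _))
    rw [← ENNReal.ofReal_mul hC1, Real.enorm_eq_ofReal_abs] at h1
    exact (ENNReal.ofReal_le_ofReal_iff (by positivity)).1 h1
  calc _ ≤ |c| * (C1 * (C2 / μB)) := by gcongr
    _ = |c| * C1 * C2 / μB := by ring
    _ ≤ _ := by gcongr; linarith
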